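/- arXiv:1808.05169 — 6 statements merged into one kernel-verified Lean document; each statement's English description precedes it below -/
import Mathlib

section
/- There exist ε > 0 and C > 0 such that for every Δt ∈ [0, ε), with β(Δt) the unique solution in (0, σ_K/σ_S] of the monopoly quartic equation and λ(Δt) := β(Δt)σ_S²/(σ_K² + β(Δt)²σ_S²), one has λ(Δt)·β(Δt) < 1 and |λ(Δt) − (σ_S/(2σ_K) − (γ/8)Δt)| ≤ C·(Δt)^{3/2}. -/
/-- Normalised quartic. -/
lemma aux_exists (r a : ℝ) (ha : 0 ≤ a) :
    ∃ x : ℝ, 0 < x ∧ x ≤ 1 ∧ (1 - x^2)^2 + r * x^2 * (1 - x^2) - a * x * (1 + x^2) = 0 := by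
  have hc : ContinuousOn (fun x : ℝ => (1 - x^2)^2 + r * x^2 * (1 - x^2) - a * x * (1 + x^2))
      (Set.Icc 0 1) := by fun_prop
  have := intermediate_value_Icc' (zero_le_one) hc
  obtain ⟨x, ⟨h0, h1⟩, hx⟩ := this (show (0:ℝ) ∈ _ by constructor <;> norm_num <;> linarith)
  refine ⟨x, lt_of_le_of_ne h0 ?_, h1, hx⟩
  rintro rfl
  norm_num at hx

lemma aux_lt (r a x y : ℝ) (ha : 0 ≤ a) (hr0 : 0 ≤ r) (hr : r < 1) (hx : 0 < x) (hxy : x < y)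
    (hy : y ≤ 1)
    (h1 : (1 - x^2)^2 + r * x^2 * (1 - x^2) - a * x * (1 + x^2) = 0)
    (h2 : (1 - y^2)^2 + r * y^2 * (1 - y^2) - a * y * (1 + y^2) = 0) : False := by
  have hu : 0 < y^2 - x^2 := by nlinarith
  have hv : 0 ≤ 1 - y^2 := by nlinarith
  have hA : a * x * (1 + x^2) ≤ a * y * (1 + y^2) := by
    have : 0 ≤ y := by linarith
    gcongr
  have hB : ((1 - x^2)^2 + r * x^2 * (1 - x^2)) - ((1 - y^2)^2 + r * y^2 * (1 - y^2))
      = (y^2 - x^2) * ((1 - r) * ((1 - x^2) + (1 - y^2)) + r) := by ring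
  have hC : 0 < (1 - r) * ((1 - x^2) + (1 - y^2)) + r := by
    have : 0 < (1 - r) * ((1 - x^2) + (1 - y^2)) := mul_pos (by linarith) (by linarith)
    linarith
  have := mul_pos hu hC
  linarith

lemma aux_est (r a x : ℝ) (ha : 0 ≤ a) (hr0 : 0 ≤ r) (hx : 0 < x) (hx1 : x ≤ 1)
    (h1 : (1 - x^2)^2 + r * x^2 * (1 - x^2) - a * x * (1 + x^2) = 0) :
    |x / (1 + x^2) - (1 / 2 - a / 8)| ≤ (a + r) * √(2 * a) := by
  have hu : 0 ≤ 1 - x^2 := by nlinarith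
  have hx2 : x^2 ≤ 1 := by linarith
  have hxx : 0 < x^2 := by positivity
  have hus : 1 - x^2 ≤ √(2 * a) := by
    apply Real.le_sqrt_of_sq_le
    have h3 : 0 ≤ r * x^2 * (1 - x^2) := by positivity
    have h4 : x * (1 + x^2) ≤ 1 * 2 := by gcongr; linarith
    nlinarith
  have key : x / (1 + x^2) - (1 / 2 - a / 8) =
      a * ((1 - x^2)^2 / (8 * (1 + x)^4)) + r * (x^2 * (1 - x^2) / (2 * (1 + x)^2 * (1 + x^2))) := by
    field_simp
    linear_combination (-8 * (1+x)^2) * h1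
  have hp : 1 ≤ (1 + x)^2 := by nlinarith
  have hp4 : 1 ≤ (1 + x)^4 := by nlinarith
  have e1 : (1 - x^2)^2 / (8 * (1 + x)^4) ≤ √(2 * a) := by
    refine le_trans ?_ hus
    rw [div_le_iff₀ (by positivity)]
    nlinarith
  have e2 : x^2 * (1 - x^2) / (2 * (1 + x)^2 * (1 + x^2)) ≤ √(2 * a) := by
    refine le_trans ?_ hus
    rw [div_le_iff₀ (by positivity)]
    have : 1 ≤ 2 * (1 + x)^2 * (1 + x^2) := by nlinarith
    nlinarith
  rw [key, abs_of_nonneg (by positivity), add_mul]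
  gcongr


/-- with `β(Δt)` the unique solution of the monopoly quartic in
`(0, σ_K/σ_S]` and `λ(Δt) = β σ_S²/(σ_K² + β²σ_S²)`, one has `λβ < 1` and
`λ(Δt) = σ_S/(2σ_K) − (γ/8)Δt + O((Δt)^{3/2})`. -/
theorem stmt2 (σS σK γ ρ : ℝ) (hσS : 0 < σS) (hσK : 0 < σK) (hγ : 0 < γ) (hρ : 0 < ρ) :
    ∃ ε > 0, ∃ C > 0, ∀ Δt : ℝ, 0 ≤ Δt → Δt < ε →
      ∃ β : ℝ,
        (β ∈ Set.Ioc 0 (σK / σS) ∧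
          0 = (1 - ρ * Δt) * β ^ 4
                - (2 - ρ * Δt + β * γ * Δt) * (σK / σS) ^ 2 * β ^ 2
                + (σK / σS) ^ 4 * (1 - β * γ * Δt)) ∧
        (∀ b : ℝ, b ∈ Set.Ioc 0 (σK / σS) →
          0 = (1 - ρ * Δt) * b ^ 4
                - (2 - ρ * Δt + b * γ * Δt) * (σK / σS) ^ 2 * b ^ 2
                + (σK / σS) ^ 4 * (1 - b * γ * Δt) → b = β) ∧
        (β * σS ^ 2 / (σK ^ 2 + β ^ 2 * σS ^ 2)) * β < 1 ∧
        |β * σS ^ 2 / (σK ^ 2 + β ^ 2 * σS ^ 2) - (σS / (2 * σK) - γ / 8 * Δt)|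
          ≤ C * Δt ^ ((3 : ℝ) / 2) := by
  obtain ⟨s, hs⟩ : ∃ s, s = σK / σS := ⟨_, rfl⟩
  have hs0 : 0 < s := by rw [hs]; positivity
  have hK : σK = s * σS := by rw [hs]; field_simp
  have hquart : ∀ h x : ℝ, (1 - ρ * h) * (s * x) ^ 4
                - (2 - ρ * h + (s * x) * γ * h) * s ^ 2 * (s * x) ^ 2
                + s ^ 4 * (1 - (s * x) * γ * h) =
      s^4 * ((1 - x^2)^2 + (ρ * h) * x^2 * (1 - x^2) - (γ * s * h) * x * (1 + x^2)) := by
    intros; ring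
  rw [← hs]
  refine ⟨1 / ρ, by positivity, 1 / s * ((γ * s + ρ) * √(2 * (γ * s))), by positivity, ?_⟩
  intro h h0 h1
  have hr : ρ * h < 1 := by
    rw [lt_div_iff₀ hρ] at h1; linarith
  have ha : 0 ≤ γ * s * h := by positivity
  have hr0 : 0 ≤ ρ * h := by positivity
  obtain ⟨x, hx, hx1, hxe⟩ := aux_exists (ρ * h) (γ * s * h) ha
  refine ⟨s * x, ⟨⟨by positivity, by nlinarith⟩, ?_⟩, ?_, ?_, ?_⟩
  · rw [hquart, hxe, mul_zero]
  · rintro b ⟨hb0, hb1⟩ hb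
    obtain ⟨y, rfl⟩ : ∃ y, b = s * y := ⟨b / s, by field_simp⟩
    rw [hquart] at hb
    have hy : 0 < y := by
      by_contra hcon
      nlinarith
    have hy1 : y ≤ 1 := by
      by_contra hcon
      nlinarith
    have hye := (mul_eq_zero.mp hb.symm).resolve_left (by positivity)
    rcases lt_trichotomy y x with hlt | heq | hlt
    · exact (aux_lt _ _ y x ha hr0 hr hy hlt hx1 hye hxe).elim
    · rw [heq]
    · exact (aux_lt _ _ x y ha hr0 hr hx hlt hy1 hxe hye).elim
  · rw [hK, div_mul_eq_mul_div, div_lt_one (by positivity)]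
    have : 0 < (s * σS)^2 := by positivity
    nlinarith
  · have est := aux_est _ _ x ha hr0 hx hx1 hxe
    have e1 : s * x * σS ^ 2 / (σK ^ 2 + (s * x) ^ 2 * σS ^ 2) - (σS / (2 * σK) - γ / 8 * h)
        = 1 / s * (x / (1 + x^2) - (1 / 2 - (γ * s * h) / 8)) := by
      have : (s * σS)^2 + (s * x)^2 * σS^2 = s^2 * σS^2 * (1 + x^2) := by ring
      rw [hK, this]
      field_simp
    have e2 : h ^ ((3:ℝ)/2) = h * √h := by
      rw [Real.sqrt_eq_rpow, show (3:ℝ)/2 = 1 + 1/2 by norm_num,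
        Real.rpow_add_of_nonneg h0 (by norm_num) (by norm_num), Real.rpow_one]
    rw [e1, abs_mul, abs_of_pos (by positivity : 0 < 1 / s), e2, mul_assoc (1 / s)]
    have e3 : √(2 * (γ * s * h)) = √(2 * (γ * s)) * √h := by
      rw [← Real.sqrt_mul (by positivity)]; ring_nf
    refine mul_le_mul_of_nonneg_left (est.trans (le_of_eq ?_)) (by positivity : 0 ≤ 1 / s)
    rw [e3]; ring
end

section
/- There exist ε > 0 and C > 0 such that for every Δt ∈ (0, ε), the quantities A(Δt) := (1−ρΔt)(1−φ(Δt))²γΔt / (1 − (1−ρΔt)(1−φ(Δt))²) and B(Δt) := (1−ρΔt)β(Δt)(2(1−λ(Δt)β(Δt)) − β(Δt)(A(Δt) + γΔt)) are well defined (the denominator in A is nonzero) and satisfy |A(Δt) − (√2/4)·γ^{1/2}(σ_S/σ_K)^{1/2}·√Δt| ≤ C·Δt and |B(Δt) − (σ_K/σ_S − (√2/4)·γ^{1/2}(σ_K/σ_S)^{3/2}·√Δt)| ≤ C·Δt. -/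
set_option maxHeartbeats 1000000 in
lemma core_bounds (s γ ρ h w x : ℝ) (hs : 0 < s) (hγ : 0 < γ) (hρ : 0 < ρ) (hh : 0 < h)
    (hw : 0 < w) (hw2 : w ^ 2 = 2 * (s * γ) * h) (hx0 : 0 < x) (hx1 : x ≤ 1)
    (hρh : ρ * h ≤ 1) (hsm : 2 * (4 * (s * γ) + ρ) * h ≤ w)
    (heq : (1 - x ^ 2) * (1 - (1 - ρ * h) * x ^ 2) = s * γ * h * (x * (1 + x ^ 2))) :
    0 < 1 - (1 - ρ * h) * x ^ 4 ∧
    |(1 - ρ * h) * x ^ 4 * γ * h / (1 - (1 - ρ * h) * x ^ 4) - γ * h / (2 * w)|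
      ≤ (γ * (2 * (4 * (s * γ) + ρ) + 2 * (s * γ) + ρ) / (2 * (s * γ)) + γ) * h ∧
    |(1 - ρ * h) * (s * x) * (2 * (1 / (1 + x ^ 2)) - (s * x) *
        ((1 - ρ * h) * x ^ 4 * γ * h / (1 - (1 - ρ * h) * x ^ 4) + γ * h))
        - (s - s ^ 2 * (γ * h / (2 * w)))|
      ≤ (s * (2 * (s * γ) + ρ) + s ^ 2 *
        ((γ * (2 * (4 * (s * γ) + ρ) + 2 * (s * γ) + ρ) / (2 * (s * γ)) + γ) + 2 * γ)) * h := by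
  obtain ⟨g, hgdef⟩ : ∃ g, g = s * γ := ⟨_, rfl⟩
  have hg : 0 < g := by rw [hgdef]; positivity
  rw [← hgdef] at hw2 hsm heq ⊢
  obtain ⟨u, hu⟩ : ∃ u, u = 1 - x ^ 2 := ⟨_, rfl⟩
  have hx2 : x ^ 2 = 1 - u := by linarith
  have hx2le : x ^ 2 ≤ 1 := by nlinarith
  have hx2pos : 0 < x ^ 2 := by positivity
  have hu0 : 0 ≤ u := by linarith
  have hu1 : u ≤ 1 := by linarith
  have hρh0 : 0 < ρ * h := by positivity
  have hgh : 0 < g * h := by positivity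
  have heq2 : u ^ 2 + ρ * h * x ^ 2 * u = g * h * (x * (1 + x ^ 2)) := by
    rw [← heq, hu]; ring
  have hxx : x * (1 + x ^ 2) ≤ 2 := by nlinarith
  have husq : u ^ 2 ≤ 2 * g * h := by
    have h1 : 0 ≤ ρ * h * x ^ 2 * u := by positivity
    nlinarith [mul_le_mul_of_nonneg_left hxx hgh.le]
  have huw : u ≤ w := by
    apply le_of_sq_le_sq _ hw.le
    linarith
  have hlow : w - u ≤ (4 * g + ρ) * h := by
    have h1 : 1 - x ≤ u := by rw [hu]; nlinarith
    have h2 : 2 - x * (1 + x ^ 2) ≤ 4 * u := by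
      have : 2 - x * (1 + x ^ 2) = (1 - x) * (x ^ 2 + x + 2) := by ring
      rw [this]; nlinarith
    have h3 : w ^ 2 - u ^ 2 ≤ (4 * g + ρ) * h * u := by
      have h4 : ρ * h * x ^ 2 * u ≤ ρ * h * u := by
        have := mul_le_mul_of_nonneg_left hx2le (mul_nonneg hρh0.le hu0)
        linarith
      have h5 := mul_le_mul_of_nonneg_left h2 hgh.le
      linarith
    have h6 : 0 ≤ (4 * g + ρ) * h := by positivity
    have h7 : (w - u) * (w + u) ≤ (4 * g + ρ) * h * (w + u) := by
      have := mul_nonneg h6 hw.le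
      nlinarith
    exact le_of_mul_le_mul_right h7 (by linarith)
  have huhalf : w / 2 ≤ u := by linarith
  obtain ⟨r, hr⟩ : ∃ r, r = 1 - ρ * h := ⟨_, rfl⟩
  have hr0 : 0 ≤ r := by linarith
  have hr1 : r ≤ 1 := by linarith
  rw [← hr]
  obtain ⟨D, hD⟩ : ∃ D, D = 1 - r * x ^ 4 := ⟨_, rfl⟩
  have hx4 : x ^ 4 = (1 - u) ^ 2 := by rw [← hx2]; ring
  have hx4le : x ^ 4 ≤ 1 := pow_le_one₀ hx0.le hx1
  have hx4pos : 0 < x ^ 4 := by positivity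
  have hDe : D = 2 * u - u ^ 2 + ρ * h * x ^ 4 := by
    rw [hD, hr, hx4]; ring
  have hDu : u ≤ D := by
    have : 0 < ρ * h * x ^ 4 := by positivity
    nlinarith
  have hDpos : 0 < D := by linarith
  have hD2 : u + ρ * h * x ^ 2 ≤ D := by
    have h1 : D = u + ρ * h * x ^ 2 + u * (r * x ^ 2) := by
      rw [hDe, hr, hx4, hx2]; ring
    have : 0 ≤ u * (r * x ^ 2) := by positivity
    linarith
  have hrx : r * x ^ 4 = 1 - D := by linarith
  obtain ⟨A, hA⟩ : ∃ A, A = r * x ^ 4 * γ * h / (1 - r * x ^ 4) := ⟨_, rfl⟩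
  obtain ⟨a, ha⟩ : ∃ a, a = γ * h / (2 * w) := ⟨_, rfl⟩
  have hAe : A = γ * h / D - γ * h := by
    rw [hA, ← hD, hrx]; field_simp
  have hA0 : 0 ≤ A := by
    rw [hA, ← hD]; positivity
  obtain ⟨M, hM⟩ : ∃ M, M = 2 * (4 * g + ρ) + 2 * g + ρ := ⟨_, rfl⟩
  have hM0 : 0 < M := by rw [hM]; positivity
  rw [← hA, ← ha, ← hM, ← hD]
  have hγh : 0 < γ * h := by positivity
  have hwD : w ^ 2 ≤ 2 * w * D := by
    have := mul_le_mul_of_nonneg_left (huhalf.trans hDu) hw.le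
    linarith
  have hdiff : |2 * w - D| ≤ M * h := by
    have h1 : ρ * h * x ^ 4 ≤ ρ * h := mul_le_of_le_one_right hρh0.le hx4le
    have h2 : 0 < ρ * h * x ^ 4 := by positivity
    have h3 : 0 ≤ u ^ 2 := by positivity
    rw [abs_le, hM]
    constructor <;> linarith [mul_pos hρ hh]
  have hAa : |A - a| ≤ (γ * M / (2 * g) + γ) * h := by
    have h1 : A - a = γ * h * ((2 * w - D) / (2 * w * D)) - γ * h := by
      rw [hAe, ha]; field_simp; ring
    have h2 : |(2 * w - D) / (2 * w * D)| ≤ M / (2 * g) := by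
      rw [abs_div, abs_of_pos (show 0 < 2 * w * D by positivity)]
      calc |2 * w - D| / (2 * w * D) ≤ (M * h) / (2 * g * h) := by
            apply div_le_div₀ (by positivity) hdiff (by positivity)
            linarith
        _ = M / (2 * g) := by field_simp
    rw [h1]
    calc _ ≤ |γ * h * ((2 * w - D) / (2 * w * D))| + |γ * h| := abs_sub _ _
      _ ≤ γ * h * (M / (2 * g)) + γ * h := by
          rw [abs_mul, abs_of_pos hγh]
          gcongr
      _ = _ := by ring
  refine ⟨hDpos, hAa, ?_⟩
  have e1 : A * (1 - r * x ^ 2) ≤ γ * h := by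
    have h1 : 1 - r * x ^ 2 = u + ρ * h * x ^ 2 := by rw [hr, hu]; ring
    have h2 : A * D ≤ γ * h := by
      have : A * D = γ * h * (1 - D) := by rw [hAe]; field_simp
      rw [this]; exact mul_le_of_le_one_right hγh.le (by linarith)
    rw [h1]
    exact (mul_le_mul_of_nonneg_left hD2 hA0).trans h2
  have hrx2 : r * x ^ 2 ≤ 1 := by nlinarith
  have hrx20 : 0 ≤ r * x ^ 2 := by positivity
  have e0 : 0 ≤ A * (1 - r * x ^ 2) := mul_nonneg hA0 (by linarith)
  have e2 : γ * h * (r * x ^ 2) ≤ γ * h := mul_le_of_le_one_right hγh.le hrx2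
  have e20 : 0 ≤ γ * h * (r * x ^ 2) := by positivity
  have q0 : 0 ≤ (1 - x) ^ 2 / (1 + x ^ 2) := by positivity
  have q1 : (1 - x) ^ 2 / (1 + x ^ 2) ≤ 2 * g * h := by
    rw [div_le_iff₀ (by positivity)]
    have h1 : 1 - x ≤ u := by rw [hu]; nlinarith
    have h2 : (1 - x) ^ 2 ≤ u ^ 2 := pow_le_pow_left₀ (by linarith) h1 2
    nlinarith
  have p1 : 2 * x / (1 + x ^ 2) ≤ 1 := by
    rw [div_le_iff₀ (by positivity)]; nlinarith [sq_nonneg (1 - x)]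
  have p0 : 0 ≤ 2 * x / (1 + x ^ 2) := by positivity
  have e3 : ρ * h * (2 * x / (1 + x ^ 2)) ≤ ρ * h := mul_le_of_le_one_right hρh0.le p1
  have e30 : 0 ≤ ρ * h * (2 * x / (1 + x ^ 2)) := by positivity
  have key : r * (s * x) * (2 * (1 / (1 + x ^ 2)) - s * x * (A + γ * h)) - (s - s ^ 2 * a)
      = - (s * ((1 - x) ^ 2 / (1 + x ^ 2) + ρ * h * (2 * x / (1 + x ^ 2))))
        + s ^ 2 * (-(A - a) + A * (1 - r * x ^ 2) - γ * h * (r * x ^ 2)) := by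
    have : ρ * h = 1 - r := by linarith
    rw [this]
    field_simp
    ring
  rw [key]
  have f1 : |- (s * ((1 - x) ^ 2 / (1 + x ^ 2) + ρ * h * (2 * x / (1 + x ^ 2))))|
      ≤ s * ((2 * g + ρ) * h) := by
    rw [abs_neg, abs_mul, abs_of_pos hs]
    apply mul_le_mul_of_nonneg_left _ hs.le
    rw [abs_of_nonneg (by positivity)]
    linarith
  have f2 : |s ^ 2 * (-(A - a) + A * (1 - r * x ^ 2) - γ * h * (r * x ^ 2))|
      ≤ s ^ 2 * (((γ * M / (2 * g) + γ) + 2 * γ) * h) := by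
    rw [abs_mul, abs_of_pos (show 0 < s ^ 2 by positivity)]
    apply mul_le_mul_of_nonneg_left _ (by positivity)
    obtain ⟨l1, l2⟩ := abs_le.mp hAa
    rw [abs_le]
    constructor <;> linarith
  calc _ ≤ _ := abs_add_le _ _
    _ ≤ _ := add_le_add f1 f2
    _ = _ := by ring

lemma root_le (g c x y : ℝ) (hg : 0 < g) (hc0 : 0 ≤ c) (hc1 : c ≤ 1)
    (hx0 : 0 < x) (hy1 : y ≤ 1) (hxy : x < y)
    (hx : (1 - x ^ 2) * (1 - c * x ^ 2) = g * (x * (1 + x ^ 2)))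
    (hy : (1 - y ^ 2) * (1 - c * y ^ 2) = g * (y * (1 + y ^ 2))) : False := by
  have h1 : x ^ 2 < y ^ 2 := by nlinarith
  have h2 : y ^ 2 ≤ 1 := by nlinarith
  have h5 : c * x ^ 2 ≤ c * y ^ 2 := mul_le_mul_of_nonneg_left h1.le hc0
  have h6 : c * y ^ 2 ≤ 1 := by nlinarith
  have h3 : (1 - y ^ 2) * (1 - c * y ^ 2) ≤ (1 - x ^ 2) * (1 - c * x ^ 2) := by
    apply mul_le_mul <;> nlinarith
  have h4 : x * (1 + x ^ 2) < y * (1 + y ^ 2) := by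
    apply mul_lt_mul'' hxy <;> nlinarith
  have := mul_lt_mul_of_pos_left h4 hg
  linarith

lemma quartic_iff (s γ ρ h x : ℝ) (hs : 0 < s) :
    (0 = (1 - ρ * h) * (s * x) ^ 4 - (2 - ρ * h + (s * x) * γ * h) * s ^ 2 * (s * x) ^ 2
                + s ^ 4 * (1 - (s * x) * γ * h)) ↔
    (1 - x ^ 2) * (1 - (1 - ρ * h) * x ^ 2) = s * γ * h * (x * (1 + x ^ 2)) := by
  have h4 : s ^ 4 ≠ 0 := by positivity
  constructor
  · intro H
    apply mul_left_cancel₀ h4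
    linear_combination -H
  · intro H
    linear_combination -(s ^ 4) * H

/-- for small `Δt > 0`, the value-function coefficients
`A = (1−ρΔt)(1−φ)²γΔt / (1 − (1−ρΔt)(1−φ)²)` and
`B = (1−ρΔt)β(2(1−λβ) − β(A+γΔt))` are well defined and satisfy
`A = (√2/4)γ^{1/2}(σ_S/σ_K)^{1/2}√Δt + O(Δt)` and
`B = σ_K/σ_S − (√2/4)γ^{1/2}(σ_K/σ_S)^{3/2}√Δt + O(Δt)`. -/
theorem stmt4 (σS σK γ ρ : ℝ) (hσS : 0 < σS) (hσK : 0 < σK) (hγ : 0 < γ) (hρ : 0 < ρ) :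
    ∃ ε > 0, ∃ C > 0, ∀ Δt : ℝ, 0 < Δt → Δt < ε →
      ∃ β lam φ A B : ℝ,
        (β ∈ Set.Ioc 0 (σK / σS) ∧
          0 = (1 - ρ * Δt) * β ^ 4
                - (2 - ρ * Δt + β * γ * Δt) * (σK / σS) ^ 2 * β ^ 2
                + (σK / σS) ^ 4 * (1 - β * γ * Δt)) ∧
        (∀ b : ℝ, b ∈ Set.Ioc 0 (σK / σS) →
          0 = (1 - ρ * Δt) * b ^ 4
                - (2 - ρ * Δt + b * γ * Δt) * (σK / σS) ^ 2 * b ^ 2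
                + (σK / σS) ^ 4 * (1 - b * γ * Δt) → b = β) ∧
        lam = β * σS ^ 2 / (σK ^ 2 + β ^ 2 * σS ^ 2) ∧
        φ = 1 - lam * β / (1 - lam * β) ∧
        1 - (1 - ρ * Δt) * (1 - φ) ^ 2 ≠ 0 ∧
        A = (1 - ρ * Δt) * (1 - φ) ^ 2 * γ * Δt / (1 - (1 - ρ * Δt) * (1 - φ) ^ 2) ∧
        B = (1 - ρ * Δt) * β * (2 * (1 - lam * β) - β * (A + γ * Δt)) ∧
        |A - Real.sqrt 2 / 4 * Real.sqrt γ * Real.sqrt (σS / σK) * Real.sqrt Δt| ≤ C * Δt ∧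
        |B - (σK / σS
              - Real.sqrt 2 / 4 * Real.sqrt γ * (σK / σS) ^ ((3 : ℝ) / 2) * Real.sqrt Δt)|
          ≤ C * Δt := by
  obtain ⟨s, hsd⟩ : ∃ s, s = σK / σS := ⟨_, rfl⟩
  have hs : 0 < s := by rw [hsd]; positivity
  have hinv : σS / σK = s⁻¹ := by rw [hsd, inv_div]
  have hK : σK = s * σS := by rw [hsd]; field_simp
  rw [← hsd, hinv]
  have hk : 0 < 4 * (s * γ) + ρ := by positivity
  obtain ⟨C1, hC1⟩ : ∃ C1, C1 =
    (γ * (2 * (4 * (s * γ) + ρ) + 2 * (s * γ) + ρ) / (2 * (s * γ)) + γ) := ⟨_, rfl⟩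
  obtain ⟨C2, hC2⟩ : ∃ C2, C2 = (s * (2 * (s * γ) + ρ) + s ^ 2 *
        ((γ * (2 * (4 * (s * γ) + ρ) + 2 * (s * γ) + ρ) / (2 * (s * γ)) + γ) + 2 * γ)) := ⟨_, rfl⟩
  have hC1p : 0 < C1 := by rw [hC1]; positivity
  have hC2p : 0 < C2 := by rw [hC2]; positivity
  refine ⟨min (1 / ρ) (s * γ / (2 * (4 * (s * γ) + ρ) ^ 2)), by positivity, C1 + C2,
    by positivity, ?_⟩
  intro h hh hlt
  obtain ⟨hl1, hl2⟩ := lt_min_iff.mp hlt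
  have hρh : ρ * h ≤ 1 := by
    rw [lt_div_iff₀ hρ] at hl1; linarith
  have hsg : 0 < s * γ := by positivity
  obtain ⟨w, hwd⟩ : ∃ w, w = √2 * √γ * √s * √h := ⟨_, rfl⟩
  have hw : 0 < w := by rw [hwd]; positivity
  have hw2 : w ^ 2 = 2 * (s * γ) * h := by
    rw [hwd, mul_pow, mul_pow, mul_pow, Real.sq_sqrt (by norm_num), Real.sq_sqrt hγ.le,
      Real.sq_sqrt hs.le, Real.sq_sqrt hh.le]
    ring
  have hsm : 2 * (4 * (s * γ) + ρ) * h ≤ w := by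
    apply le_of_sq_le_sq _ hw.le
    rw [hw2]
    rw [lt_div_iff₀ (by positivity)] at hl2
    have := mul_le_mul_of_nonneg_left hl2.le hh.le
    linarith
  have hav : γ * h / (2 * w) = √2 / 4 * √γ * √(s⁻¹) * √h := by
    rw [Real.sqrt_inv, hwd, div_eq_iff (by positivity)]
    have h1 : √2 * √2 = 2 := Real.mul_self_sqrt (by norm_num)
    have h2 : √γ * √γ = γ := Real.mul_self_sqrt hγ.le
    have h3 : √h * √h = h := Real.mul_self_sqrt hh.le
    have h4 : (√s)⁻¹ * √s = 1 := inv_mul_cancel₀ (by positivity)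
    calc γ * h = (√γ * √γ) * (√h * √h) := by rw [h2, h3]
      _ = (√2 * √2) / 2 * (√γ * √γ) * (√h * √h) * ((√s)⁻¹ * √s) := by rw [h4, h1]; ring
      _ = _ := by ring
  have hbv : s ^ 2 * (γ * h / (2 * w)) = √2 / 4 * √γ * s ^ ((3 : ℝ) / 2) * √h := by
    have h32 : s ^ ((3 : ℝ) / 2) = s * √s := by
      rw [show (3 : ℝ) / 2 = 1 + 1 / 2 by norm_num, Real.rpow_add hs, Real.rpow_one,
        Real.sqrt_eq_rpow]
    have h5 : √s * √s = s := Real.mul_self_sqrt hs.le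
    have h6 : s * (√s)⁻¹ = √s := by
      rw [mul_inv_eq_iff_eq_mul₀ (by positivity)]; exact h5.symm
    rw [hav, h32, Real.sqrt_inv]
    linear_combination √2 / 4 * √γ * √h * s * h6
  rw [← hbv, ← hav]
  -- existence of the root
  obtain ⟨x, ⟨hx0', hx1⟩, hxe⟩ : ∃ x ∈ Set.Icc (0 : ℝ) 1,
      s * γ * h * (x * (1 + x ^ 2)) - (1 - x ^ 2) * (1 - (1 - ρ * h) * x ^ 2) = 0 := by
    have hc : ContinuousOn (fun x : ℝ => s * γ * h * (x * (1 + x ^ 2))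
        - (1 - x ^ 2) * (1 - (1 - ρ * h) * x ^ 2)) (Set.Icc 0 1) := by fun_prop
    have := intermediate_value_Icc (zero_le_one' ℝ) hc
    refine this ⟨by norm_num, ?_⟩
    have : 0 < s * γ * h := by positivity
    norm_num
    linarith
  have hx0 : 0 < x := by
    rcases hx0'.eq_or_lt with h0 | h0
    · rw [← h0] at hxe; norm_num at hxe
    · exact h0
  have heq : (1 - x ^ 2) * (1 - (1 - ρ * h) * x ^ 2) = s * γ * h * (x * (1 + x ^ 2)) := by
    linarith
  obtain ⟨hD, hA, hB⟩ := core_bounds s γ ρ h w x hs hγ hρ hh hw hw2 hx0 hx1 hρh hsm heq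
  rw [← hC1] at hA
  rw [← hC2] at hB
  have hlb : (s * x) * σS ^ 2 / (σK ^ 2 + (s * x) ^ 2 * σS ^ 2) * (s * x) = x ^ 2 / (1 + x ^ 2) := by
    rw [hK]; field_simp
  have h1lb : 1 - x ^ 2 / (1 + x ^ 2) = 1 / (1 + x ^ 2) := by field_simp; ring
  have hφ : (1 - (1 - x ^ 2 / (1 + x ^ 2) / (1 / (1 + x ^ 2)))) = x ^ 2 := by
    field_simp; ring
  have hx22 : (x ^ 2) ^ 2 = x ^ 4 := by ring
  refine ⟨s * x, _, _, _, _, ⟨⟨by positivity, mul_le_of_le_one_right hs.le hx1⟩, (quartic_iff s γ ρ h x hs).mpr heq⟩,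
    ?_, rfl, rfl, ?_, rfl, rfl, ?_, ?_⟩
  · rintro b ⟨hb0, hbs⟩ hbe
    obtain ⟨y, rfl⟩ : ∃ y, b = s * y := ⟨b / s, by field_simp⟩
    have hye := (quartic_iff s γ ρ h y hs).mp hbe
    have hy0 : 0 < y := pos_of_mul_pos_right hb0 hs.le
    have hy1 : y ≤ 1 := le_of_mul_le_mul_left (by linarith : s * y ≤ s * 1) hs
    have hgh : 0 < s * γ * h := by positivity
    have hρh0 : 0 < ρ * h := by positivity
    rcases lt_trichotomy x y with hlt' | rfl | hlt'
    · exact (root_le (s * γ * h) (1 - ρ * h) x y hgh (by linarith) (by linarith) hx0 hy1 hlt' heq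
        hye).elim
    · rfl
    · exact (root_le (s * γ * h) (1 - ρ * h) y x hgh (by linarith) (by linarith) hy0 hx1 hlt' hye
        heq).elim
  · rw [hlb, h1lb, hφ, hx22]; exact hD.ne'
  · rw [hlb, h1lb, hφ, hx22]
    exact hA.trans (mul_le_mul_of_nonneg_right (by linarith) hh.le)
  · rw [hlb, h1lb, hφ, hx22]
    exact hB.trans (mul_le_mul_of_nonneg_right (by linarith) hh.le)
end

section
/- There exists ε > 0 such that for every Δt ∈ [0, ε) the constrained system — β_Σ = Σ_{j=1}^k β_j; for each i ∈ {1,…,k}, 0 = (1−ρ_iΔt)β_i²β_Σ² − (2−ρ_iΔt + β_Σγ_iΔt)(σ_K/σ_S)²β_iβ_Σ + (σ_K/σ_S)⁴(1−β_iγ_iΔt); 0 < β_Σ; and 0 < β_iβ_Σ ≤ σ_K²/σ_S² for each i — has exactly one solution (β_Σ, β_1, …, β_k) ∈ ℝ^{1+k}. -/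
theorem aux_mono {a G c B B' b b' : ℝ} (ha : 0 ≤ a) (ha1 : a ≤ 1) (hG : 0 ≤ G) (hc : 0 < c)
    (hB : 0 < B) (hBB : B ≤ B') (hb : 0 < b)
    (h : (c - b * B) * (c - a * (b * B)) = G * c * b * (B ^ 2 + c))
    (h' : (c - b' * B') * (c - a * (b' * B')) = G * c * b' * (B' ^ 2 + c))
    (hle : b' * B' ≤ c) : b' ≤ b := by
  by_contra hlt
  push Not at hlt
  have h1 : b * B < b' * B' := by nlinarith
  have h0 : 0 < b * B := by positivity
  have h2 : G * c * b * (B ^ 2 + c) ≤ G * c * b' * (B' ^ 2 + c) := by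
    have : 0 < b' := hb.trans hlt
    gcongr
  rw [← h, ← h'] at h2
  generalize b * B = x at *
  generalize b' * B' = y at *
  have h3 : 0 < c - a * x := by nlinarith
  nlinarith [mul_pos (sub_pos.2 h1) h3, mul_nonneg (sub_nonneg.2 hle) (mul_nonneg ha (sub_pos.2 h1).le)]

/-- closed form of the root -/
noncomputable def auxRoot (a b : ℝ) : ℝ := 2 / (b + √(b ^ 2 - 4 * a))

theorem auxRoot_spec {a b : ℝ} (ha : 0 ≤ a) (ha1 : a ≤ 1) (hb : 1 + a ≤ b) :
    a * auxRoot a b ^ 2 - b * auxRoot a b + 1 = 0 ∧ 0 < auxRoot a b ∧ auxRoot a b ≤ 1 ∧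
      1 / b ≤ auxRoot a b := by
  have hD : (1 - a) ^ 2 ≤ b ^ 2 - 4 * a := by nlinarith
  have hD0 : 0 ≤ b ^ 2 - 4 * a := (sq_nonneg _).trans hD
  have hs := Real.sq_sqrt hD0
  have hs0 := Real.sqrt_nonneg (b ^ 2 - 4 * a)
  have hs1 : 1 - a ≤ √(b ^ 2 - 4 * a) := Real.le_sqrt_of_sq_le hD
  have hs2 : √(b ^ 2 - 4 * a) ≤ b := by
    rw [Real.sqrt_le_left (by linarith)]; linarith
  unfold auxRoot
  generalize √(b ^ 2 - 4 * a) = s at *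
  have hp : 0 < b + s := by linarith
  refine ⟨?_, by positivity, ?_, ?_⟩
  · field_simp
    nlinarith
  · rw [div_le_one hp]; linarith
  · rw [div_le_div_iff₀ (by linarith) hp]; linarith

theorem aux_exists_s6 (k : ℕ) (hk : 1 ≤ k) (c : ℝ) (hc : 0 < c) (a G : Fin k → ℝ)
    (ha : ∀ i, 0 ≤ a i) (ha1 : ∀ i, a i ≤ 1) (hG : ∀ i, 0 ≤ G i) :
    ∃ B > 0, ∃ x : Fin k → ℝ, (∀ i, 0 < x i ∧ x i ≤ 1 ∧
      a i * x i ^ 2 - (1 + a i + G i * (B + c / B)) * x i + 1 = 0) ∧ ∑ i, x i = B ^ 2 / c := by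
  let X : ℝ → Fin k → ℝ := fun B i => auxRoot (a i) (1 + a i + G i * (B + c / B))
  have hb : ∀ B > 0, ∀ i, 1 + a i ≤ 1 + a i + G i * (B + c / B) := by
    intro B hB i
    have : 0 ≤ G i * (B + c / B) := mul_nonneg (hG i) (by positivity)
    linarith
  have hX := fun (B : ℝ) (hB : B > 0) (i : Fin k) => auxRoot_spec (ha i) (ha1 i) (hb B hB i)
  let i0 : Fin k := ⟨0, hk⟩
  let M := G i0
  have hM : 0 ≤ M := hG i0
  let B0 := c / (2 + M * (1 + c) + c)
  have hden : 0 < 2 + M * (1 + c) + c := by positivity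
  have hB0 : 0 < B0 := div_pos hc hden
  have hB01 : B0 ≤ 1 := by
    rw [div_le_one hden]; nlinarith [mul_nonneg hM hc.le]
  have hB0e : B0 * (2 + M * (1 + c) + c) = c := div_mul_cancel₀ _ hden.ne'
  let B1 : ℝ := 1 + c * k
  have hck : 0 ≤ c * k := by positivity
  have hB011 : B0 ≤ B1 := by show B0 ≤ 1 + c * k; linarith
  have hcont : ContinuousOn (fun B => ∑ i, X B i - B ^ 2 / c) (Set.Icc B0 B1) := by
    refine ContinuousOn.sub (continuousOn_finsetSum _ fun i _ => ?_) (by fun_prop)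
    have hc1 : ContinuousOn (fun B => 1 + a i + G i * (B + c / B)) (Set.Icc B0 B1) := by
      refine continuousOn_const.add (continuousOn_const.mul (continuousOn_id.add
        (continuousOn_const.div continuousOn_id fun B hB => ?_)))
      exact (hB0.trans_le hB.1).ne'
    refine continuousOn_const.div (hc1.add ((hc1.pow 2).sub continuousOn_const).sqrt) ?_
    intro B hB
    have h1 := hb B (hB0.trans_le hB.1) i
    have h2 := Real.sqrt_nonneg ((1 + a i + G i * (B + c / B)) ^ 2 - 4 * a i)
    have h3 := ha i
    apply ne_of_gt
    show 0 < (1 + a i + G i * (B + c / B)) + √((1 + a i + G i * (B + c / B)) ^ 2 - 4 * a i)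
    linarith
  have hlow : 0 ≤ ∑ i, X B0 i - B0 ^ 2 / c := by
    have h1 : X B0 i0 ≤ ∑ i, X B0 i :=
      Finset.single_le_sum (f := X B0) (fun i _ => (hX B0 hB0 i).2.1.le) (Finset.mem_univ _)
    have h2 := (hX B0 hB0 i0).2.2.2
    have h3 : B0 ^ 2 / c ≤ 1 / (1 + a i0 + G i0 * (B0 + c / B0)) := by
      have h4 := hb B0 hB0 i0
      have h5 := ha i0
      rw [div_le_div_iff₀ hc (by linarith)]
      have h6 : B0 ^ 2 * (1 + a i0 + G i0 * (B0 + c / B0))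
        = B0 * (B0 * (1 + a i0) + M * (B0 * B0 + c)) := by
        show _ = B0 * (B0 * (1 + a i0) + G i0 * (B0 * B0 + c))
        field_simp
      rw [h6]
      have h7 : B0 * (1 + a i0) + M * (B0 * B0 + c) ≤ 2 + M * (1 + c) + c := by
        have := ha1 i0
        have : B0 * (1 + a i0) ≤ 1 * 2 := by gcongr; linarith
        have : M * (B0 * B0 + c) ≤ M * (1 * 1 + c) := by gcongr
        linarith
      have := mul_le_mul_of_nonneg_left h7 hB0.le
      linarith
    have h8 : 1 / (1 + a i0 + G i0 * (B0 + c / B0)) ≤ X B0 i0 := h2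
    linarith
  have hhigh : ∑ i, X B1 i - B1 ^ 2 / c ≤ 0 := by
    have h1 : ∑ i, X B1 i ≤ ∑ i : Fin k, (1 : ℝ) :=
      Finset.sum_le_sum fun i _ => (hX B1 (hB0.trans_le hB011) i).2.2.1
    simp at h1
    have h2 : (k : ℝ) ≤ B1 ^ 2 / c := by
      rw [le_div_iff₀ hc]
      show _ ≤ (1 + c * k) ^ 2
      nlinarith
    linarith
  obtain ⟨B, hB, hBe⟩ := intermediate_value_Icc' hB011 hcont ⟨hhigh, hlow⟩
  have hBp : 0 < B := hB0.trans_le hB.1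
  refine ⟨B, hBp, X B, fun i => ⟨(hX B hBp i).2.1, (hX B hBp i).2.2.1, (hX B hBp i).1⟩, ?_⟩
  have : ∑ i, X B i - B ^ 2 / c = 0 := hBe
  linarith

/-- for sufficiently small `Δt ≥ 0`, the constrained system for
`(β_Σ, β_1, …, β_k)` — `β_Σ = Σ_j β_j`; the `k` quadratic equilibrium equations;
`0 < β_Σ`; and `0 < β_iβ_Σ ≤ σ_K²/σ_S²` — has exactly one solution. -/
theorem stmt6 (k : ℕ) (hk : 1 ≤ k) (σS σK : ℝ) (hσS : 0 < σS) (hσK : 0 < σK)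
    (γ ρ : Fin k → ℝ) (hγ : ∀ i, 0 < γ i) (hρ : ∀ i, 0 < ρ i) :
    ∃ ε > 0, ∀ Δt : ℝ, 0 ≤ Δt → Δt < ε →
      ∃! p : ℝ × (Fin k → ℝ),
        p.1 = ∑ j, p.2 j ∧
        (∀ i, 0 = (1 - ρ i * Δt) * (p.2 i) ^ 2 * p.1 ^ 2
            - (2 - ρ i * Δt + p.1 * γ i * Δt) * (σK / σS) ^ 2 * p.2 i * p.1
            + (σK / σS) ^ 4 * (1 - p.2 i * γ i * Δt)) ∧
        0 < p.1 ∧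
        (∀ i, 0 < p.2 i * p.1 ∧ p.2 i * p.1 ≤ σK ^ 2 / σS ^ 2) := by
  have hS : 0 ≤ ∑ i, ρ i := Finset.sum_nonneg fun i _ => (hρ i).le
  refine ⟨1 / (1 + ∑ i, ρ i), by positivity, fun t ht0 ht => ?_⟩
  rw [lt_div_iff₀ (by positivity)] at ht
  have hr : ∀ i, ρ i * t ≤ 1 := by
    intro i
    have : ρ i ≤ ∑ i, ρ i :=
      Finset.single_le_sum (f := ρ) (fun i _ => (hρ i).le) (Finset.mem_univ i)
    nlinarith
  have hr0 : ∀ i, 0 ≤ ρ i * t := fun i => mul_nonneg (hρ i).le ht0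
  have hG : ∀ i, 0 ≤ γ i * t := fun i => mul_nonneg (hγ i).le ht0
  have h4 : (σK / σS) ^ 4 = ((σK / σS) ^ 2) ^ 2 := by ring
  have hc : 0 < (σK / σS) ^ 2 := by positivity
  rw [← div_pow, h4]
  generalize (σK / σS) ^ 2 = c at *
  apply existsUnique_of_exists_of_unique
  · obtain ⟨B, hB, x, hx, hsum⟩ := aux_exists_s6 k hk c hc (fun i => 1 - ρ i * t) (fun i => γ i * t)
      (fun i => by have := hr i; linarith)
      (fun i => by have := hr0 i; linarith) hG
    refine ⟨(B, fun i => x i * (c / B)), ?_, ?_, hB, ?_⟩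
    · simp only
      rw [← Finset.sum_mul, hsum]
      field_simp
    · intro i
      obtain ⟨h1, h2, h3⟩ := hx i
      simp only at h3 ⊢
      have e : x i * (c / B) * B = c * x i := by field_simp
      have : (1 - ρ i * t) * (x i * (c / B)) ^ 2 * B ^ 2
            - (2 - ρ i * t + B * γ i * t) * c * (x i * (c / B)) * B
            + c ^ 2 * (1 - x i * (c / B) * γ i * t)
          = c ^ 2 * ((1 - ρ i * t) * x i ^ 2
            - (1 + (1 - ρ i * t) + γ i * t * (B + c / B)) * x i + 1) := by
        field_simp
        ring
      rw [this, h3, mul_zero]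
    · intro i
      obtain ⟨h1, h2, h3⟩ := hx i
      simp only
      have e : x i * (c / B) * B = c * x i := by field_simp
      rw [e]
      exact ⟨by positivity, by nlinarith⟩
  · have key : ∀ (B : ℝ) (b : Fin k → ℝ) (B' : ℝ) (b' : Fin k → ℝ),
        (∀ i, 0 = (1 - ρ i * t) * (b i) ^ 2 * B ^ 2
            - (2 - ρ i * t + B * γ i * t) * c * b i * B + c ^ 2 * (1 - b i * γ i * t)) →
        (∀ i, 0 = (1 - ρ i * t) * (b' i) ^ 2 * B' ^ 2
            - (2 - ρ i * t + B' * γ i * t) * c * b' i * B' + c ^ 2 * (1 - b' i * γ i * t)) →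
        0 < B → (∀ i, 0 < b i * B) → (∀ i, b' i * B' ≤ c) → B ≤ B' → ∀ i, b' i ≤ b i := by
      intro B b B' b' h h' hB hb hb' hBB i
      refine aux_mono (a := 1 - ρ i * t) (G := γ i * t) (by linarith [hr i]) (by linarith [hr0 i])
        (hG i) hc hB hBB (pos_of_mul_pos_left (hb i) hB.le) ?_ ?_ (hb' i)
      · linear_combination -(h i)
      · linear_combination -(h' i)
    rintro ⟨B, b⟩ ⟨B', b'⟩ ⟨hs, h, hB, hb⟩ ⟨hs', h', hB', hb'⟩
    simp only at hs h hB hb hs' h' hB' hb'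
    have k1 := key B b B' b' h h' hB (fun i => (hb i).1) (fun i => (hb' i).2)
    have k2 := key B' b' B b h' h hB' (fun i => (hb' i).1) (fun i => (hb i).2)
    have hBB : B = B' := by
      rcases le_total B B' with hl | hl
      · refine le_antisymm hl ?_
        rw [hs, hs']
        exact Finset.sum_le_sum fun i _ => k1 hl i
      · refine le_antisymm ?_ hl
        rw [hs, hs']
        exact Finset.sum_le_sum fun i _ => k2 hl i
    refine Prod.ext hBB (funext fun i => le_antisymm (k2 hBB.ge i) (k1 hBB.le i))
end

section
/- There exist ε > 0, C > 0 and functions β_Σ, β_1, …, β_k : [0, ε) → ℝ such that for every Δt ∈ [0, ε), (β_Σ(Δt), β_1(Δt), …, β_k(Δt)) is the unique solution of the constrained system, and for each i, |β_i(Δt) − (k^{−1/2}(σ_K/σ_S) − ((1+k)^{1/2}/(2k^{3/4}))(2γ_i^{1/2} − (1/k)Σ_{j=1}^k γ_j^{1/2})(σ_K/σ_S)^{3/2}·√Δt)| ≤ C·Δt and |β_Σ(Δt) − (k^{1/2}(σ_K/σ_S) − ((1+k)^{1/2}/(2k^{3/4}))·Σ_{j=1}^k γ_j^{1/2}·(σ_K/σ_S)^{3/2}·√Δt)|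 ≤ C·Δt. -/
open Filter Topology Asymptotics in
theorem asymp (k : ℕ) (hk : 1 ≤ k) (c ρ : Fin k → ℝ) (hc : ∀ i, 0 < c i) (hρ : ∀ i, 0 < ρ i)
    (b : ℝ → ℝ) (x : ℝ → Fin k → ℝ)
    (h : ∀ᶠ D in 𝓝[≥] (0:ℝ), 1/2 ≤ b D ∧ b D ≤ √k ∧ (∀ i, 0 < x D i ∧ x D i ≤ 1 ∧
      (1 - x D i)^2 + ρ i * D * x D i * (1 - x D i) = c i * D * (b D + 1 / b D) * x D i) ∧
      ∑ i, x D i = (b D)^2) (S : ℝ) (r : Fin k → ℝ)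
    (hr : ∀ i, r i = √(c i * (√k + 1/√k))) (hS : S = ∑ i, r i) :
    ((fun D => b D - (√k - √D * S / (2 * √k))) =O[𝓝[≥] (0:ℝ)] fun D => D) ∧
    (∀ i, (fun D => x D i / b D - (1/√k - √D * r i / √k + √D * S / (2 * √k ^ 3)))
      =O[𝓝[≥] (0:ℝ)] fun D => D) := by
  obtain ⟨κ, hκ⟩ : ∃ κ, κ = √(k:ℝ) := ⟨_, rfl⟩
  have hκ1 : 1 ≤ κ := by rw [hκ]; exact Real.one_le_sqrt.2 (by exact_mod_cast hk)
  have hκk : κ ^ 2 = k := by rw [hκ]; exact Real.sq_sqrt (by positivity)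
  simp only [← hκ] at h hr ⊢
  have hκ0 : 0 < κ := by linarith
  have hD : ∀ᶠ D in 𝓝[≥] (0:ℝ), 0 ≤ D := eventually_mem_nhdsWithin
  have hr0 : ∀ i, 0 < r i := fun i => by
    rw [hr]; have := hc i; positivity
  have hr2 : ∀ i, r i ^ 2 = c i * (κ + 1/κ) := fun i => by
    rw [hr]; have := hc i; exact Real.sq_sqrt (by positivity)
  -- t
  have ht0 : (fun D : ℝ => √D) =O[𝓝[≥] (0:ℝ)] (fun _ => (1:ℝ)) := by
    have : Tendsto (fun D : ℝ => √D) (𝓝[≥] (0:ℝ)) (𝓝 (√0)) :=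
      (Real.continuous_sqrt.tendsto 0).mono_left nhdsWithin_le_nhds
    exact this.isBigO_one ℝ
  have hDt : (fun D : ℝ => D) =O[𝓝[≥] (0:ℝ)] (fun D => √D * √D) := by
    refine IsBigO.of_bound 1 ?_
    filter_upwards [hD] with D h0
    rw [Real.mul_self_sqrt h0]; simp
  have htD : (fun D : ℝ => √D * √D) =O[𝓝[≥] (0:ℝ)] (fun D => D) := by
    refine IsBigO.of_bound 1 ?_
    filter_upwards [hD] with D h0
    rw [Real.mul_self_sqrt h0]; simp
  -- Step 1
  have s1 : ∀ i, (fun D => 1 - x D i) =O[𝓝[≥] (0:ℝ)] (fun D => √D) := by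
    intro i
    refine IsBigO.of_bound (√(c i * (κ + 2))) ?_
    filter_upwards [h, hD] with D ⟨hb1, hb2, hx, hs⟩ h0
    obtain ⟨hx0, hx1, he⟩ := hx i
    have hci := hc i
    have hri := hρ i
    rw [Real.norm_eq_abs, Real.norm_eq_abs, abs_of_nonneg (by linarith), abs_of_nonneg (by positivity),
      ← Real.sqrt_mul (by positivity)]
    apply Real.le_sqrt_of_sq_le
    have h1 : 1 / b D ≤ 2 := by rw [div_le_iff₀ (by linarith)]; linarith
    have h2 : c i * D * (b D + 1 / b D) * x D i ≤ c i * D * (κ + 2) * 1 := by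
      gcongr
    have h3 : 0 ≤ ρ i * D * x D i * (1 - x D i) := by
      have : 0 ≤ 1 - x D i := by linarith
      positivity
    nlinarith
  have s2 : (fun D => b D ^ 2 - κ ^ 2) =O[𝓝[≥] (0:ℝ)] (fun D => √D) := by
    have : (fun D => ∑ i, (1 - x D i)) =O[𝓝[≥] (0:ℝ)] (fun D => √D) :=
      IsBigO.fun_sum fun i _ => s1 i
    refine this.neg_left.congr' ?_ EventuallyEq.rfl
    filter_upwards [h] with D ⟨hb1, hb2, hx, hs⟩
    simp [Finset.sum_sub_distrib, hs, hκk]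
  have s3 : (fun D => b D - κ) =O[𝓝[≥] (0:ℝ)] (fun D => √D) := by
    refine IsBigO.trans (IsBigO.of_bound 1 ?_) s2
    filter_upwards [h] with D ⟨hb1, hb2, hx, hs⟩
    rw [Real.norm_eq_abs, Real.norm_eq_abs, sq_sub_sq, abs_mul, abs_of_nonneg (by linarith : 0 ≤ b D + κ)]
    nlinarith [abs_nonneg (b D - κ)]
  have s4 : (fun D => (b D + 1 / b D) - (κ + 1/κ)) =O[𝓝[≥] (0:ℝ)] (fun D => √D) := by
    refine IsBigO.trans (IsBigO.of_bound 3 ?_) s3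
    filter_upwards [h] with D ⟨hb1, hb2, hx, hs⟩
    have hb0 : 0 < b D := by linarith
    have e : (b D + 1 / b D) - (κ + 1/κ) = (1 - 1 / (b D * κ)) * (b D - κ) := by
      field_simp; ring
    rw [e, norm_mul]
    gcongr
    have h1 : 1 / (b D * κ) ≤ 2 := by rw [div_le_iff₀ (by positivity)]; nlinarith
    have h2 : 0 < 1 / (b D * κ) := by positivity
    rw [Real.norm_eq_abs, abs_le]; constructor <;> linarith
  have mO : (fun D => (b D + 1 / b D)) =O[𝓝[≥] (0:ℝ)] (fun _ => (1:ℝ)) := by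
    have := (s4.trans ht0).add (isBigO_const_const (κ + 1/κ) (one_ne_zero (α := ℝ)) (𝓝[≥] (0:ℝ)))
    simpa using this
  have xO : ∀ i, (fun D => x D i) =O[𝓝[≥] (0:ℝ)] (fun _ => (1:ℝ)) := by
    intro i
    have := (isBigO_const_const (1:ℝ) (one_ne_zero (α := ℝ)) (𝓝[≥] (0:ℝ))).sub ((s1 i).trans ht0)
    simpa using this
  have s5 : ∀ i, (fun D => (1 - x D i)^2 - D * r i ^ 2) =O[𝓝[≥] (0:ℝ)] (fun D => √D * √D * √D) := by
    intro i
    have a1 := ((hDt.mul s4).const_mul_left (c i))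
    have a2 := ((hDt.mul (s1 i)).mul mO).const_mul_left (c i)
    have a3 := ((hDt.mul (s1 i)).mul (xO i)).const_mul_left (ρ i)
    simp only [mul_one] at a2 a3
    refine ((a1.sub a2).sub a3).congr' ?_ EventuallyEq.rfl
    filter_upwards [h] with D ⟨hb1, hb2, hx, hs⟩
    obtain ⟨hx0, hx1, he⟩ := hx i
    rw [hr2]
    linear_combination -he
  have s6 : ∀ i, (fun D => (1 - x D i) - √D * r i) =O[𝓝[≥] (0:ℝ)] (fun D => √D * √D) := by
    intro i
    obtain ⟨K, hK⟩ := (s5 i).bound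
    refine IsBigO.of_bound (K / r i) ?_
    filter_upwards [h, hD, hK] with D ⟨hb1, hb2, hx, hs⟩ h0 hK
    obtain ⟨hx0, hx1, he⟩ := hx i
    have hri := hr0 i
    rcases h0.eq_or_lt with h0 | h0
    · subst h0
      have : 1 - x 0 i = 0 := by simpa using he
      simp [this]
    have ht : 0 < √D := Real.sqrt_pos.2 h0
    have hDD := Real.mul_self_sqrt h0.le
    have e : (1 - x D i)^2 - D * r i ^ 2 = ((1 - x D i) + √D * r i) * ((1 - x D i) - √D * r i) := by
      linear_combination (-r i ^ 2) * (-hDD)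
    rw [e, norm_mul, Real.norm_of_nonneg (by positivity : 0 ≤ √D * √D * √D),
      Real.norm_of_nonneg (by nlinarith [mul_pos ht hri] : 0 ≤ (1 - x D i) + √D * r i)] at hK
    rw [Real.norm_of_nonneg (by positivity : 0 ≤ √D * √D), div_mul_eq_mul_div, le_div_iff₀ hri]
    have : √D * r i * ‖(1 - x D i) - √D * r i‖ ≤ K * (√D * √D * √D) := by
      refine le_trans ?_ hK
      gcongr
      linarith
    refine le_of_mul_le_mul_left ?_ ht
    linarith
  have s7 : (fun D => b D ^ 2 - κ ^ 2 + √D * S) =O[𝓝[≥] (0:ℝ)] (fun D => √D * √D) := by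
    have : (fun D => ∑ i, ((1 - x D i) - √D * r i)) =O[𝓝[≥] (0:ℝ)] (fun D => √D * √D) :=
      IsBigO.fun_sum fun i _ => s6 i
    refine this.neg_left.congr' ?_ EventuallyEq.rfl
    filter_upwards [h] with D ⟨hb1, hb2, hx, hs⟩
    simp only [Finset.sum_sub_distrib, hs, hκk, ← Finset.mul_sum, ← hS]
    simp; ring
  have s8 : (fun D => b D - (κ - √D * S / (2 * κ))) =O[𝓝[≥] (0:ℝ)] (fun D => √D * √D) := by
    refine ((s7.sub (s3.mul s3)).const_mul_left (1 / (2 * κ))).congr_left ?_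
    intro D
    field_simp; ring
  refine ⟨s8.trans htD, fun i => ?_⟩
  have a1 := (s6 i)
  have a2 := s8.const_mul_left (1/κ)
  have a3 := (s3.mul (isBigO_refl (fun D => √D) (𝓝[≥] (0:ℝ)))).const_mul_left (r i/κ - S / (2 * κ ^3))
  refine IsBigO.trans (IsBigO.of_bound 2 ?_) (((a1.neg_left.sub a2).add a3).trans htD)
  filter_upwards [h] with D ⟨hb1, hb2, hx, hs⟩
  have hb0 : 0 < b D := by linarith
  have e : -((1 - x D i) - √D * r i) - 1 / κ * (b D - (κ - √D * S / (2 * κ)))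
      + (r i/κ - S / (2 * κ ^3)) * ((b D - κ) * √D)
      = b D * (x D i / b D - (1/κ - √D * r i / κ + √D * S / (2 * κ ^ 3))) := by
    field_simp; ring
  rw [e, norm_mul, Real.norm_of_nonneg hb0.le]
  nlinarith [norm_nonneg (x D i / b D - (1/κ - √D * r i / κ + √D * S / (2 * κ ^ 3)))]

theorem exist_sol (k : ℕ) (hk : 1 ≤ k) (c ρ : Fin k → ℝ) (hc : ∀ i, 0 < c i) (hρ : ∀ i, 0 < ρ i)
    (D : ℝ) (h0 : 0 ≤ D) (h1 : ∀ i, ρ i * D ≤ 1/2) (h2 : ∀ i, c i * D ≤ 1/3) :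
    ∃ (b : ℝ) (x : Fin k → ℝ), 1/2 ≤ b ∧ b ≤ √k ∧ (∀ i, 0 < x i ∧ x i ≤ 1 ∧
      (1 - x i)^2 + ρ i * D * x i * (1 - x i) = c i * D * (b + 1 / b) * x i) ∧
      ∑ i, x i = b^2 := by
  have hκ1 : 1 ≤ √(k:ℝ) := Real.one_le_sqrt.2 (by exact_mod_cast hk)
  have hκk : √(k:ℝ) ^ 2 = k := Real.sq_sqrt (by positivity)
  let P : Fin k → ℝ → ℝ := fun i b => 2 - ρ i * D + c i * D * (b + 1 / b)
  let X : Fin k → ℝ → ℝ := fun i b => 2 / (P i b + √(P i b ^ 2 - 4 * (1 - ρ i * D)))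
  have hPge : ∀ i b, 1/2 ≤ b → 2 - ρ i * D ≤ P i b := fun i b hb => by
    have hb0 : 0 < b := by linarith
    have := hc i
    have : 0 ≤ c i * D * (b + 1 / b) := by positivity
    simp only [P]; linarith
  have hP0 : ∀ i b, 1/2 ≤ b → 0 < P i b := fun i b hb => by
    linarith [hPge i b hb, h1 i]
  have hdisc : ∀ i b, 1/2 ≤ b → (ρ i * D)^2 ≤ P i b ^ 2 - 4 * (1 - ρ i * D) := fun i b hb => by
    nlinarith [hPge i b hb, h1 i]
  have hX : ∀ i b, 1/2 ≤ b → 0 < X i b ∧ X i b ≤ 1 ∧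
      (1 - X i b)^2 + ρ i * D * X i b * (1 - X i b) = c i * D * (b + 1 / b) * X i b := by
    intro i b hb
    have hρi := hρ i
    have p0 := hP0 i b hb
    have pg := hPge i b hb
    have hd := hdisc i b hb
    obtain ⟨q, hq⟩ : ∃ q, q = √(P i b ^ 2 - 4 * (1 - ρ i * D)) := ⟨_, rfl⟩
    have hq2 : q^2 = P i b ^ 2 - 4 * (1 - ρ i * D) := by
      rw [hq]; exact Real.sq_sqrt (le_trans (by positivity) hd)
    have hqg : ρ i * D ≤ q := by rw [hq]; exact Real.le_sqrt_of_sq_le hd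
    have hq0 : 0 ≤ q := by rw [hq]; positivity
    have hXe : X i b = 2 / (P i b + q) := by simp only [X, hq]
    have hcm : c i * D * (b + 1 / b) = P i b - 2 + ρ i * D := by simp only [P]; ring
    rw [hXe, hcm]
    refine ⟨by positivity, ?_, ?_⟩
    · rw [div_le_one (by positivity)]; linarith
    · have : P i b + q ≠ 0 := by positivity
      field_simp
      linear_combination hq2
  have hcont : ContinuousOn (fun b => b^2 - ∑ i, X i b) (Set.Icc (1/2) (√(k:ℝ))) := by
    have hPc : ∀ i, ContinuousOn (P i) (Set.Icc (1/2) (√(k:ℝ))) := fun i => by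
      simp only [P]
      refine ContinuousOn.add continuousOn_const (ContinuousOn.mul continuousOn_const
        (continuousOn_id.add (continuousOn_const.div continuousOn_id ?_)))
      intro b hb; have := hb.1; linarith
    refine ContinuousOn.sub (by fun_prop) (continuousOn_finsetSum _ fun i _ => ?_)
    refine continuousOn_const.div ((hPc i).add (Real.continuous_sqrt.comp_continuousOn
      (((hPc i).pow 2).sub continuousOn_const))) ?_
    intro b hb
    have := hP0 i b hb.1
    positivity
  have hlo : (1/2:ℝ)^2 - ∑ i, X i (1/2) ≤ 0 := by
    let i0 : Fin k := ⟨0, by omega⟩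
    have a1 : X i0 (1/2) ≤ ∑ i, X i (1/2) :=
      Finset.single_le_sum (f := fun i => X i (1/2)) (fun i _ => (hX i _ le_rfl).1.le) (Finset.mem_univ i0)
    have a2 : P i0 (1/2) ≤ 3 := by
      have := h2 i0
      have := mul_nonneg (hρ i0).le h0
      simp only [P]; norm_num; linarith
    have p0 := hP0 i0 _ le_rfl
    have a3 : √(P i0 (1/2) ^ 2 - 4 * (1 - ρ i0 * D)) ≤ 3 := by
      apply Real.sqrt_le_iff.2 ⟨by norm_num, ?_⟩
      have := h1 i0
      nlinarith
    have a4 : 1/4 ≤ X i0 (1/2) := by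
      simp only [X]
      rw [le_div_iff₀ (by positivity)]
      linarith
    norm_num at *; linarith
  have hhi : 0 ≤ √(k:ℝ)^2 - ∑ i, X i (√(k:ℝ)) := by
    have : ∑ i, X i (√(k:ℝ)) ≤ ∑ i : Fin k, (1:ℝ) :=
      Finset.sum_le_sum fun i _ => (hX i _ (by linarith)).2.1
    rw [hκk]; simp at this; linarith
  obtain ⟨b, hb, hbe⟩ := intermediate_value_Icc (by linarith : (1/2:ℝ) ≤ √(k:ℝ)) hcont ⟨hlo, hhi⟩
  refine ⟨b, fun i => X i b, hb.1, hb.2, fun i => hX i b hb.1, ?_⟩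
  simp only at hbe; linarith

/-- monotonicity of the reduced equation -/
theorem Fmono (a u v : ℝ) (ha0 : 0 ≤ a) (ha : a ≤ 1/2) (hu : 0 < u) (huv : u < v) (hv : v ≤ 1) :
    (1-v)^2 + a * v * (1-v) < (1-u)^2 + a * u * (1-u) := by
  have : 0 < (v-u) * (2 - a - (1-a)*(u+v)) := by
    apply mul_pos (by linarith)
    nlinarith
  nlinarith

theorem uniq_step (a g b b' z z' : ℝ) (ha0 : 0 ≤ a) (ha : a ≤ 1/2) (hg : 0 ≤ g) (hb : 0 < b)
    (hz : 0 < z) (hz1 : b'^2 * z' ≤ 1)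
    (e : (1 - b^2*z)^2 + a * (b^2*z) * (1 - b^2*z) = g * (b^3+b) * z)
    (e' : (1 - b'^2*z')^2 + a * (b'^2*z') * (1 - b'^2*z') = g * (b'^3+b') * z')
    (hbb : b ≤ b') (hzz : z ≤ z') (hne : b < b' ∨ z < z') : False := by
  have hb' : 0 < b' := by linarith
  have hz' : 0 < z' := by linarith
  have h1 : b^2*z < b'^2*z' := by
    rcases hne with h | h
    · calc b^2*z < b'^2*z := by gcongr
        _ ≤ _ := by gcongr
    · calc b^2*z ≤ b'^2*z := by gcongr
        _ < _ := by gcongr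
  have h2 := Fmono a _ _ ha0 ha (by positivity) h1 hz1
  have h3 : g * (b^3+b) * z ≤ g * (b'^3+b') * z' := by gcongr
  linarith

/-- reduction of the original equation -/
theorem reduce_eq (s B β g r D : ℝ) (hs : 0 < s) (hB : 0 < B) :
    (0 = (1 - r * D) * β ^ 2 * B ^ 2 - (2 - r * D + B * g * D) * s ^ 2 * β * B
              + s ^ 4 * (1 - β * g * D)) ↔
    (1 - (B/s)^2*(β/B))^2 + (r * D) * ((B/s)^2*(β/B)) * (1 - (B/s)^2*(β/B))
      = (g * s * D) * ((B/s)^3+(B/s)) * (β/B) := by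
  have : s ≠ 0 := hs.ne'
  have : B ≠ 0 := hB.ne'
  have key : (1 - (B/s)^2*(β/B))^2 + (r * D) * ((B/s)^2*(β/B)) * (1 - (B/s)^2*(β/B))
      - (g * s * D) * ((B/s)^3+(B/s)) * (β/B) = ((1 - r * D) * β ^ 2 * B ^ 2
        - (2 - r * D + B * g * D) * s ^ 2 * β * B + s ^ 4 * (1 - β * g * D)) / s^4 := by
    field_simp; ring
  constructor
  · intro h
    rw [← h] at key
    simp at key; linarith
  · intro h
    rw [h, sub_self] at key
    have := (div_eq_zero_iff.1 key.symm)
    rcases this with h | h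
    · exact h.symm
    · exact absurd h (by positivity)

def Sys (k : ℕ) (s : ℝ) (γ ρ : Fin k → ℝ) (D : ℝ) (B : ℝ) (β : Fin k → ℝ) : Prop :=
  B = ∑ j, β j ∧ (∀ i, 0 = (1 - ρ i * D) * (β i) ^ 2 * B ^ 2
              - (2 - ρ i * D + B * γ i * D) * s ^ 2 * β i * B
              + s ^ 4 * (1 - β i * γ i * D)) ∧ 0 < B ∧ (∀ i, 0 < β i * B ∧ β i * B ≤ s ^ 2)

theorem uniq_le (k : ℕ) (hk : 1 ≤ k) (s : ℝ) (hs : 0 < s) (γ ρ : Fin k → ℝ) (hγ : ∀ i, 0 < γ i)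
    (hρ : ∀ i, 0 < ρ i) (D : ℝ) (h0 : 0 ≤ D) (h1 : ∀ i, ρ i * D ≤ 1/2) (B B' : ℝ)
    (β β' : Fin k → ℝ) (h : Sys k s γ ρ D B β) (h' : Sys k s γ ρ D B' β') (hBB : B ≤ B') :
    B = B' ∧ ∀ i, β' i ≤ β i := by
  obtain ⟨hS, he, hB, hx⟩ := h
  obtain ⟨hS', he', hB', hx'⟩ := h'
  have hz : ∀ i, 0 < β i / B := fun i => div_pos (pos_of_mul_pos_left (hx i).1 hB.le) hB
  have hz1 : ∀ i, (B'/s)^2 * (β' i / B') ≤ 1 := fun i => by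
    have : (B'/s)^2 * (β' i / B') = β' i * B' / s^2 := by field_simp
    rw [this, div_le_one (by positivity)]; exact (hx' i).2
  have hbb : B / s ≤ B' / s := by gcongr
  have st : ∀ i, β i / B ≤ β' i / B' → (B / s < B' / s ∨ β i / B < β' i / B') → False :=
    fun i hzz hne => uniq_step (ρ i * D) (γ i * s * D) (B/s) (B'/s) (β i / B) (β' i / B')
      (mul_nonneg (hρ i).le h0) (h1 i) (by have := hγ i; positivity) (by positivity) (hz i) (hz1 i)
      ((reduce_eq _ _ _ _ _ _ hs hB).1 (he i)) ((reduce_eq _ _ _ _ _ _ hs hB').1 (he' i)) hbb hzz hne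
  have hBe : B = B' := by
    by_contra hne
    have hlt : B < B' := lt_of_le_of_ne hBB hne
    have hlt' : B / s < B' / s := by gcongr
    have hall : ∀ i, β' i / B' < β i / B := fun i => by
      by_contra hc
      exact st i (not_lt.1 hc) (Or.inl hlt')
    have : ∑ i, β' i / B' < ∑ i, β i / B :=
      Finset.sum_lt_sum_of_nonempty ⟨⟨0, by omega⟩, Finset.mem_univ _⟩ fun i _ => hall i
    rw [← Finset.sum_div, ← Finset.sum_div, ← hS, ← hS', div_self hB.ne', div_self hB'.ne'] at this
    exact lt_irrefl _ this
  refine ⟨hBe, fun i => ?_⟩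
  by_contra hc
  rw [not_le] at hc
  have : β i / B < β' i / B' := by rw [← hBe]; gcongr
  exact st i this.le (Or.inr this)

theorem uniq (k : ℕ) (hk : 1 ≤ k) (s : ℝ) (hs : 0 < s) (γ ρ : Fin k → ℝ) (hγ : ∀ i, 0 < γ i)
    (hρ : ∀ i, 0 < ρ i) (D : ℝ) (h0 : 0 ≤ D) (h1 : ∀ i, ρ i * D ≤ 1/2) (B B' : ℝ)
    (β β' : Fin k → ℝ) (h : Sys k s γ ρ D B β) (h' : Sys k s γ ρ D B' β') :
    B = B' ∧ β = β' := by
  have hB : B = B' := by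
    rcases le_total B B' with hh | hh
    · exact (uniq_le k hk s hs γ ρ hγ hρ D h0 h1 B B' β β' h h' hh).1
    · exact (uniq_le k hk s hs γ ρ hγ hρ D h0 h1 B' B β' β h' h hh).1.symm
  refine ⟨hB, funext fun i => le_antisymm ?_ ?_⟩
  · exact (uniq_le k hk s hs γ ρ hγ hρ D h0 h1 B' B β' β h' h hB.ge).2 i
  · exact (uniq_le k hk s hs γ ρ hγ hρ D h0 h1 B B' β β' h h' hB.le).2 i

theorem sys_of (k : ℕ) (s : ℝ) (hs : 0 < s) (γ ρ : Fin k → ℝ) (D : ℝ) (b : ℝ) (x : Fin k → ℝ)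
    (hb : 1/2 ≤ b) (hx : ∀ i, 0 < x i ∧ x i ≤ 1 ∧
      (1 - x i)^2 + ρ i * D * x i * (1 - x i) = (γ i * s) * D * (b + 1 / b) * x i)
    (hS : ∑ i, x i = b^2) : Sys k s γ ρ D (s * b) (fun i => s * (x i / b)) := by
  have hb0 : 0 < b := by linarith
  refine ⟨?_, fun i => ?_, by positivity, fun i => ?_⟩
  · rw [← Finset.mul_sum, ← Finset.sum_div, hS]; field_simp
  · rw [reduce_eq _ _ _ _ _ _ hs (by positivity)]
    have e1 : s * b / s = b := by field_simp
    have e2 : s * (x i / b) / (s * b) = x i / b^2 := by field_simp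
    have e3 : b^2 * (x i / b^2) = x i := by field_simp
    rw [e1, e2, e3, (hx i).2.2]
    field_simp
  · have e : s * (x i / b) * (s * b) = s^2 * x i := by field_simp
    simp only [e]
    obtain ⟨a1, a2, _⟩ := hx i
    exact ⟨by positivity, by nlinarith [sq_nonneg s]⟩

open Filter Topology in
/-- a branch `(β_Σ(Δt), β_1(Δt), …, β_k(Δt))` of unique solutions of the
constrained system exists for small `Δt ≥ 0`, with asymptotics
`β_i = k^{−1/2}(σ_K/σ_S) − ((1+k)^{1/2}/(2k^{3/4}))(2γ_i^{1/2} − (1/k)Σ_j γ_j^{1/2})(σ_K/σ_S)^{3/2}√Δt + O(Δt)`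
and `β_Σ = k^{1/2}(σ_K/σ_S) − ((1+k)^{1/2}/(2k^{3/4}))Σ_j γ_j^{1/2}(σ_K/σ_S)^{3/2}√Δt + O(Δt)`. -/
theorem stmt7 (k : ℕ) (hk : 1 ≤ k) (σS σK : ℝ) (hσS : 0 < σS) (hσK : 0 < σK)
    (γ ρ : Fin k → ℝ) (hγ : ∀ i, 0 < γ i) (hρ : ∀ i, 0 < ρ i) :
    ∃ ε > 0, ∃ C > 0, ∃ βSum : ℝ → ℝ, ∃ β : ℝ → Fin k → ℝ,
      ∀ Δt : ℝ, 0 ≤ Δt → Δt < ε →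
        (βSum Δt = ∑ j, β Δt j ∧
          (∀ i, 0 = (1 - ρ i * Δt) * (β Δt i) ^ 2 * (βSum Δt) ^ 2
              - (2 - ρ i * Δt + βSum Δt * γ i * Δt) * (σK / σS) ^ 2 * β Δt i * βSum Δt
              + (σK / σS) ^ 4 * (1 - β Δt i * γ i * Δt)) ∧
          0 < βSum Δt ∧
          (∀ i, 0 < β Δt i * βSum Δt ∧ β Δt i * βSum Δt ≤ σK ^ 2 / σS ^ 2)) ∧
        (∀ q : ℝ × (Fin k → ℝ),
          (q.1 = ∑ j, q.2 j ∧
            (∀ i, 0 = (1 - ρ i * Δt) * (q.2 i) ^ 2 * q.1 ^ 2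
                - (2 - ρ i * Δt + q.1 * γ i * Δt) * (σK / σS) ^ 2 * q.2 i * q.1
                + (σK / σS) ^ 4 * (1 - q.2 i * γ i * Δt)) ∧
            0 < q.1 ∧
            (∀ i, 0 < q.2 i * q.1 ∧ q.2 i * q.1 ≤ σK ^ 2 / σS ^ 2)) →
          q.1 = βSum Δt ∧ q.2 = β Δt) ∧
        (∀ i, |β Δt i -
            (σK / σS / Real.sqrt k
              - Real.sqrt (1 + k) / (2 * (k : ℝ) ^ ((3 : ℝ) / 4))
                * (2 * Real.sqrt (γ i) - (∑ j, Real.sqrt (γ j)) / k)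
                * (σK / σS) ^ ((3 : ℝ) / 2) * Real.sqrt Δt)| ≤ C * Δt) ∧
        |βSum Δt -
            (Real.sqrt k * (σK / σS)
              - Real.sqrt (1 + k) / (2 * (k : ℝ) ^ ((3 : ℝ) / 4))
                * (∑ j, Real.sqrt (γ j))
                * (σK / σS) ^ ((3 : ℝ) / 2) * Real.sqrt Δt)| ≤ C * Δt := by

  classical
  obtain ⟨s, hs_def⟩ : ∃ s, s = σK / σS := ⟨_, rfl⟩
  have hs : 0 < s := by rw [hs_def]; positivity
  have hs2 : σK ^ 2 / σS ^ 2 = s ^ 2 := by rw [hs_def, div_pow]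
  rw [← hs_def, hs2]
  have hc : ∀ i, 0 < γ i * s := fun i => mul_pos (hγ i) hs
  let good : ℝ → Prop := fun D => 0 ≤ D ∧ (∀ i, ρ i * D ≤ 1/2) ∧ (∀ i, γ i * s * D ≤ 1/3)
  have hgood : ∀ᶠ D in 𝓝[≥] (0:ℝ), good D := by
    have aux : ∀ (a e : ℝ), 0 < e → ∀ᶠ D in 𝓝[≥] (0:ℝ), a * D ≤ e := fun a e he => by
      have : Tendsto (fun D : ℝ => a * D) (𝓝[≥] (0:ℝ)) (𝓝 (a * 0)) :=
        ((continuous_const.mul continuous_id).tendsto 0).mono_left nhdsWithin_le_nhds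
      rw [mul_zero] at this
      exact this.eventually_le_const he
    exact eventually_mem_nhdsWithin.and ((eventually_all.2 fun i => aux _ _ (by norm_num)).and
      (eventually_all.2 fun i => aux _ _ (by norm_num)))
  have hex : ∀ D, ∃ (b : ℝ) (x : Fin k → ℝ), good D → (1/2 ≤ b ∧ b ≤ √k ∧ (∀ i, 0 < x i ∧ x i ≤ 1 ∧
      (1 - x i)^2 + ρ i * D * x i * (1 - x i) = γ i * s * D * (b + 1 / b) * x i) ∧
      ∑ i, x i = b^2) := fun D => by
    by_cases hg : good D
    · obtain ⟨b, x, h⟩ := exist_sol k hk (fun i => γ i * s) ρ hc hρ D hg.1 hg.2.1 hg.2.2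
      exact ⟨b, x, fun _ => h⟩
    · exact ⟨0, 0, fun h => absurd h hg⟩
  choose b x hbx using hex
  obtain ⟨r, hr⟩ : ∃ r : Fin k → ℝ, ∀ i, r i = √(γ i * s * (√k + 1/√k)) := ⟨_, fun _ => rfl⟩
  obtain ⟨S, hS⟩ : ∃ S : ℝ, S = ∑ i, r i := ⟨_, rfl⟩
  obtain ⟨hA, hB⟩ := asymp k hk (fun i => γ i * s) ρ hc hρ b x (hgood.mono hbx) S r hr hS
  -- constants
  obtain ⟨κ, hκ⟩ : ∃ κ, κ = √(k:ℝ) := ⟨_, rfl⟩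
  have hk0 : (0:ℝ) < k := by exact_mod_cast hk
  have hκ0 : 0 < κ := by rw [hκ]; positivity
  have hκk : κ ^ 2 = k := by rw [hκ]; exact Real.sq_sqrt hk0.le
  obtain ⟨p, hp⟩ : ∃ p, p = √κ := ⟨_, rfl⟩
  have hp0 : 0 < p := by rw [hp]; positivity
  have hp2 : p ^ 2 = κ := by rw [hp]; exact Real.sq_sqrt hκ0.le
  have hk34 : (k:ℝ) ^ ((3:ℝ)/4) = p ^ 3 := by
    have : (k:ℝ) = p ^ (4:ℝ) := by
      rw [← hκk, ← hp2]; norm_cast; ring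
    rw [this, ← Real.rpow_mul hp0.le]; norm_num
  obtain ⟨w, hw⟩ : ∃ w, w = √s := ⟨_, rfl⟩
  have hw0 : 0 < w := by rw [hw]; positivity
  have hw2 : w ^ 2 = s := by rw [hw]; exact Real.sq_sqrt hs.le
  have hs32 : s ^ ((3:ℝ)/2) = w ^ 3 := by
    have : s = w ^ (2:ℝ) := by
      rw [← hw2]; norm_cast
    rw [this, ← Real.rpow_mul hw0.le]; norm_num
  have hr' : ∀ i, r i = √(1 + k) * w / p * √(γ i) := fun i => by
    have hgi := (hγ i).le
    rw [hr, Real.sqrt_eq_iff_mul_self_eq (by have := hγ i; positivity) (by positivity)]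
    have e1 : √(1 + (k:ℝ)) ^ 2 = 1 + κ ^ 2 := by rw [Real.sq_sqrt (by positivity), hκk]
    have e2 := Real.sq_sqrt hgi
    rw [← hκ]
    have : (√(1 + k) * w / p * √(γ i)) * (√(1 + k) * w / p * √(γ i))
      = √(1 + (k:ℝ)) ^ 2 * w ^ 2 / p ^ 2 * √(γ i) ^ 2 := by ring
    rw [this, e1, e2, hw2, hp2]
    field_simp
    ring
  have hS' : S = √(1 + k) * w / p * ∑ j, √(γ j) := by
    rw [hS, Finset.mul_sum]; exact Finset.sum_congr rfl fun i _ => hr' i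
  rw [hk34, hs32]
  simp only [← hκ] at hA hB ⊢
  obtain ⟨C0, hC0⟩ := (hA.const_mul_left s).bound
  choose C1 hC1 using fun i => ((hB i).const_mul_left s).bound
  have hall := hgood.and (hC0.and (eventually_all.2 hC1))
  obtain ⟨ε, hε, hball⟩ := Metric.mem_nhdsWithin_iff.1 hall
  refine ⟨ε, hε, |C0| + ∑ i, |C1 i| + 1, by positivity, fun D => s * b D,
    fun D i => s * (x D i / b D), ?_⟩
  intro D h0 hD
  obtain ⟨hg, hc0, hc1⟩ := hball ⟨by simpa [abs_of_nonneg h0] using hD, h0⟩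
  obtain ⟨hb1, hb2, hx, hsum⟩ := hbx D hg
  have hsys := sys_of k s hs γ ρ D (b D) (x D) hb1 hx hsum
  have hsumn : 0 ≤ ∑ i, |C1 i| := Finset.sum_nonneg fun i _ => abs_nonneg _
  refine ⟨hsys, fun q hq => uniq k hk s hs γ ρ hγ hρ D h0 hg.2.1 _ _ _ _ hq hsys, fun i => ?_, ?_⟩
  · have h := hc1 i
    rw [Real.norm_eq_abs, Real.norm_of_nonneg h0] at h
    have hle : |C1 i| ≤ ∑ i, |C1 i| :=
      Finset.single_le_sum (f := fun i => |C1 i|) (fun i _ => abs_nonneg _) (Finset.mem_univ i)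
    refine le_trans (le_of_eq_of_le ?_ h) ?_
    · congr 1
      rw [hr', hS']
      generalize √(1 + (k:ℝ)) = Q
      rw [← hκk, ← hw2, ← hp2]
      field_simp
      ring
    · gcongr
      linarith [le_abs_self (C1 i), abs_nonneg C0]
  · rw [Real.norm_eq_abs, Real.norm_of_nonneg h0] at hc0
    refine le_trans (le_of_eq_of_le ?_ hc0) ?_
    · congr 1
      rw [hS', ← hw2, ← hp2]
      field_simp
    · gcongr
      linarith [le_abs_self C0]
end

section
/- There exist ε > 0 and C > 0 such that for every Δt ∈ [0, ε), with (β_Σ(Δt), β_1(Δt), …, β_k(Δt)) the unique solution of the constrained system and λ(Δt) := β_Σ(Δt)σ_S²/(σ_K² + β_Σ(Δt)²σ_S²), one has λ(Δt)β_Σ(Δt) < 1 and |λ(Δt) − ((k^{1/2}/(1+k))(σ_S/σ_K) + (k^{1/4}(k−1)/(2(1+k)^{3/2}))·(1/k)Σ_{j=1}^k γ_j^{1/2}·(σ_S/σ_K)^{1/2}·√Δt)| ≤ C·Δt. -/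
def Sys8 {k : ℕ} (c ρ : Fin k → ℝ) (Δ u : ℝ) (x : Fin k → ℝ) : Prop :=
  0 < u ∧ ∑ i, x i = u ^ 2 ∧
    ∀ i, 0 < x i ∧ x i ≤ 1 ∧
      (1 - x i) ^ 2 + ρ i * Δ * x i * (1 - x i) = c i * Δ * (u + 1 / u) * x i

lemma mono8 (c ρ Δ u v x y : ℝ) (hc : 0 < c) (hρ : 0 < ρ) (hΔ : 0 ≤ Δ) (h1 : ρ * Δ < 1)
    (hu : 0 < u) (huv : u ≤ v) (hx : 0 < x) (hx1 : x ≤ 1) (hy : 0 < y) (hy1 : y ≤ 1)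
    (ex : (1 - x) ^ 2 + ρ * Δ * x * (1 - x) = c * Δ * (u + 1 / u) * x)
    (ey : (1 - y) ^ 2 + ρ * Δ * y * (1 - y) = c * Δ * (v + 1 / v) * y)
    (hxy : x / u ^ 2 ≤ y / v ^ 2) : u = v ∧ x = y := by
  have hv : 0 < v := lt_of_lt_of_le hu huv
  have hρΔ : 0 ≤ ρ * Δ := by positivity
  have hxy' : x * v ^ 2 ≤ y * u ^ 2 := by
    rwa [div_le_div_iff₀ (by positivity) (by positivity)] at hxy
  have hle : x ≤ y := by
    have : u ^ 2 ≤ v ^ 2 := by gcongr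
    have h2 : x * u ^ 2 ≤ y * u ^ 2 := le_trans (by gcongr) hxy'
    exact le_of_mul_le_mul_right h2 (by positivity)
  have hdec : (1 - y) ^ 2 + ρ * Δ * y * (1 - y) ≤ (1 - x) ^ 2 + ρ * Δ * x * (1 - x) := by
    have e : (1 - x) ^ 2 + ρ * Δ * x * (1 - x) - ((1 - y) ^ 2 + ρ * Δ * y * (1 - y))
      = (y - x) * ((1 - ρ * Δ) * ((1 - x) + (1 - y)) + ρ * Δ) := by ring
    have : 0 ≤ (y - x) * ((1 - ρ * Δ) * ((1 - x) + (1 - y)) + ρ * Δ) := by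
      apply mul_nonneg (by linarith)
      have := mul_nonneg (by linarith : 0 ≤ 1 - ρ * Δ) (by linarith : 0 ≤ (1 - x) + (1 - y))
      linarith
    linarith
  rcases hΔ.eq_or_lt with h0 | hpos
  · subst h0
    have hx' : x = 1 := by
      have : (1 - x) ^ 2 = 0 := by linarith
      have := pow_eq_zero_iff (two_ne_zero) |>.1 this
      linarith
    have hy' : y = 1 := by linarith
    subst hx'; subst hy'
    refine ⟨le_antisymm huv ?_, rfl⟩
    nlinarith
  · have h3 : (v + 1 / v) * y ≤ (u + 1 / u) * x := by
      have : c * Δ * ((v + 1 / v) * y) ≤ c * Δ * ((u + 1 / u) * x) := by linarith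
      exact le_of_mul_le_mul_left this (by positivity)
    have h4 : (v ^ 2 + 1) * y * u ≤ (u ^ 2 + 1) * x * v := by
      have e1 : (v + 1 / v) * y = (v ^ 2 + 1) * y / v := by field_simp
      have e2 : (u + 1 / u) * x = (u ^ 2 + 1) * x / u := by field_simp
      rwa [e1, e2, div_le_div_iff₀ hv hu] at h3
    -- (v²+1) x v² ≤ (v²+1) y u² ≤ (u²+1) x v u
    have h5 : (v ^ 2 + 1) * (x * v ^ 2) ≤ (u ^ 2 + 1) * x * v * u := by
      calc (v ^ 2 + 1) * (x * v ^ 2) ≤ (v ^ 2 + 1) * (y * u ^ 2) := by gcongr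
        _ = (v ^ 2 + 1) * y * u * u := by ring
        _ ≤ _ := by gcongr
    have h6 : (v ^ 2 + 1) * v ≤ (u ^ 2 + 1) * u := by
      have : (x * v) * ((v ^ 2 + 1) * v) ≤ (x * v) * ((u ^ 2 + 1) * u) := by linarith
      exact le_of_mul_le_mul_left this (by positivity)
    have h7 : v ≤ u := by
      by_contra hlt
      push Not at hlt
      have : u ^ 2 ≤ v ^ 2 := by gcongr
      have : (u ^ 2 + 1) * u < (v ^ 2 + 1) * v := by
        calc (u ^ 2 + 1) * u ≤ (v ^ 2 + 1) * u := by gcongr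
          _ < _ := by gcongr
      linarith
    have : u = v := le_antisymm huv h7
    subst this
    refine ⟨rfl, le_antisymm hle ?_⟩
    exact le_of_mul_le_mul_left h3 (by positivity)

lemma uniq8_aux {k : ℕ} (hk : 1 ≤ k) (c ρ : Fin k → ℝ) (hc : ∀ i, 0 < c i) (hρ : ∀ i, 0 < ρ i)
    (Δ : ℝ) (hΔ : 0 ≤ Δ) (h1 : ∀ i, ρ i * Δ < 1) (u v : ℝ) (x y : Fin k → ℝ)
    (hx : Sys8 c ρ Δ u x) (hy : Sys8 c ρ Δ v y) (huv : u ≤ v) : u = v := by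
  obtain ⟨hu, sx, hx⟩ := hx
  obtain ⟨hv, sy, hy⟩ := hy
  by_contra hne
  have hlt : ∀ i, y i / v ^ 2 < x i / u ^ 2 := by
    intro i
    by_contra hcon
    push Not at hcon
    exact hne (mono8 (c i) (ρ i) Δ u v (x i) (y i) (hc i) (hρ i) hΔ (h1 i) hu huv (hx i).1 (hx i).2.1
      (hy i).1 (hy i).2.1 (hx i).2.2 (hy i).2.2 hcon).1
  have : Nonempty (Fin k) := ⟨⟨0, hk⟩⟩
  have : ∑ i, y i / v ^ 2 < ∑ i, x i / u ^ 2 :=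
    Finset.sum_lt_sum_of_nonempty Finset.univ_nonempty (fun i _ => hlt i)
  rw [← Finset.sum_div, ← Finset.sum_div, sx, sy, div_self (by positivity), div_self (by positivity)] at this
  exact lt_irrefl _ this

lemma uniq8 {k : ℕ} (hk : 1 ≤ k) (c ρ : Fin k → ℝ) (hc : ∀ i, 0 < c i) (hρ : ∀ i, 0 < ρ i)
    (Δ : ℝ) (hΔ : 0 ≤ Δ) (h1 : ∀ i, ρ i * Δ < 1) (u v : ℝ) (x y : Fin k → ℝ)
    (hx : Sys8 c ρ Δ u x) (hy : Sys8 c ρ Δ v y) : u = v ∧ x = y := by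
  have huv : u = v := by
    rcases le_total u v with h | h
    · exact uniq8_aux hk c ρ hc hρ Δ hΔ h1 u v x y hx hy h
    · exact (uniq8_aux hk c ρ hc hρ Δ hΔ h1 v u y x hy hx h).symm
  subst huv
  refine ⟨rfl, ?_⟩
  obtain ⟨hu, -, hx⟩ := hx
  obtain ⟨-, -, hy⟩ := hy
  funext i
  rcases le_total (x i) (y i) with h | h
  · exact (mono8 (c i) (ρ i) Δ u u (x i) (y i) (hc i) (hρ i) hΔ (h1 i) hu le_rfl (hx i).1 (hx i).2.1
      (hy i).1 (hy i).2.1 (hx i).2.2 (hy i).2.2 (by gcongr)).2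
  · exact (mono8 (c i) (ρ i) Δ u u (y i) (x i) (hc i) (hρ i) hΔ (h1 i) hu le_rfl (hy i).1 (hy i).2.1
      (hx i).1 (hx i).2.1 (hy i).2.2 (hx i).2.2 (by gcongr)).2.symm

/-- The root of the quadratic in `(0,1]`. -/
noncomputable def root8 (c ρ Δ u : ℝ) : ℝ :=
  2 / ((2 - ρ * Δ + c * Δ * (u + 1 / u)) +
    Real.sqrt ((2 - ρ * Δ + c * Δ * (u + 1 / u)) ^ 2 - 4 * (1 - ρ * Δ)))

lemma root8_spec (c ρ Δ u : ℝ) (hc : 0 < c) (hρ : 0 < ρ) (hΔ : 0 ≤ Δ) (h1 : ρ * Δ < 1) (hu : 0 < u) :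
    2 ≤ (2 - ρ * Δ + c * Δ * (u + 1 / u)) +
    Real.sqrt ((2 - ρ * Δ + c * Δ * (u + 1 / u)) ^ 2 - 4 * (1 - ρ * Δ)) ∧
    0 < root8 c ρ Δ u ∧ root8 c ρ Δ u ≤ 1 ∧
      (1 - root8 c ρ Δ u) ^ 2 + ρ * Δ * root8 c ρ Δ u * (1 - root8 c ρ Δ u)
        = c * Δ * (u + 1 / u) * root8 c ρ Δ u := by
  unfold root8
  have ht : 0 ≤ c * Δ * (u + 1 / u) := by positivity
  have hρΔ : 0 ≤ ρ * Δ := by positivity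
  set t := c * Δ * (u + 1 / u) with htdef
  set p := ρ * Δ with hp
  have hD : p ^ 2 ≤ (2 - p + t) ^ 2 - 4 * (1 - p) := by nlinarith
  have hs : p ≤ Real.sqrt ((2 - p + t) ^ 2 - 4 * (1 - p)) := Real.le_sqrt_of_sq_le hD
  have hsq : Real.sqrt ((2 - p + t) ^ 2 - 4 * (1 - p)) ^ 2 = (2 - p + t) ^ 2 - 4 * (1 - p) :=
    Real.sq_sqrt (le_trans (sq_nonneg _) hD)
  set s := Real.sqrt ((2 - p + t) ^ 2 - 4 * (1 - p))
  have h2 : 2 ≤ 2 - p + t + s := by linarith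
  have hpos : 0 < 2 - p + t + s := by linarith
  refine ⟨h2, by positivity, ?_, ?_⟩
  · rw [div_le_one hpos]; exact h2
  · field_simp
    linear_combination hsq

lemma exist8 {k : ℕ} (hk : 1 ≤ k) (c ρ : Fin k → ℝ) (hc : ∀ i, 0 < c i) (hρ : ∀ i, 0 < ρ i)
    (Δ : ℝ) (hΔ : 0 ≤ Δ) (h1 : ∀ i, ρ i * Δ < 1) (h2 : ∀ i, 5 * c i * Δ < 1) :
    ∃ u x, Sys8 c ρ Δ u x ∧ 1 / 2 ≤ u ∧ u ≤ Real.sqrt k := by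
  have hk1 : (1 : ℝ) ≤ k := by exact_mod_cast hk
  have hm : 1 ≤ Real.sqrt k := Real.one_le_sqrt.2 hk1
  have hcont : ContinuousOn (fun u : ℝ => ∑ i, root8 (c i) (ρ i) Δ u - u ^ 2)
      (Set.Icc (1 / 2) (Real.sqrt k)) := by
    apply ContinuousOn.sub _ (by fun_prop)
    apply continuousOn_finsetSum
    intro i _
    unfold root8
    have hb : ContinuousOn (fun u : ℝ => 2 - ρ i * Δ + c i * Δ * (u + 1 / u))
        (Set.Icc (1 / 2) (Real.sqrt k)) := by
      apply ContinuousOn.add continuousOn_const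
      apply ContinuousOn.mul continuousOn_const
      apply ContinuousOn.add continuousOn_id
      apply ContinuousOn.div continuousOn_const continuousOn_id
      intro u hu
      have := hu.1
      simp only [id]
      intro h
      norm_num [h] at this
    apply ContinuousOn.div continuousOn_const
    · apply hb.add
      apply ContinuousOn.sqrt
      exact (hb.pow 2).sub continuousOn_const
    · intro u hu
      have hu0 : 0 < u := by linarith [hu.1]
      have := (root8_spec (c i) (ρ i) Δ u (hc i) (hρ i) hΔ (h1 i) hu0).1
      intro h
      linarith
  have hlo : 0 ≤ ∑ i, root8 (c i) (ρ i) Δ (1 / 2) - (1 / 2 : ℝ) ^ 2 := by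
    have hi : ∀ i, 1 / 4 ≤ root8 (c i) (ρ i) Δ (1 / 2) := by
      intro i
      obtain ⟨-, a, b, e⟩ := root8_spec (c i) (ρ i) Δ (1 / 2) (hc i) (hρ i) hΔ (h1 i) (by norm_num)
      set x := root8 (c i) (ρ i) Δ (1 / 2)
      have hr : 0 ≤ ρ i * Δ * x * (1 - x) :=
        mul_nonneg (mul_nonneg (mul_nonneg (hρ i).le hΔ) a.le) (by linarith)
      have h3 : c i * Δ * (1 / 2 + 1 / (1 / 2)) * x ≤ 1 / 2 * 1 := by
        apply mul_le_mul _ b a.le (by norm_num)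
        have := h2 i
        norm_num
        linarith
      by_contra hcon
      push Not at hcon
      nlinarith
    have : ∑ i : Fin k, (1 / 4 : ℝ) ≤ ∑ i, root8 (c i) (ρ i) Δ (1 / 2) :=
      Finset.sum_le_sum (fun i _ => hi i)
    simp at this
    norm_num at this ⊢
    linarith
  have hhi : ∑ i, root8 (c i) (ρ i) Δ (Real.sqrt k) - (Real.sqrt k) ^ 2 ≤ 0 := by
    have : ∑ i, root8 (c i) (ρ i) Δ (Real.sqrt k) ≤ ∑ i : Fin k, (1 : ℝ) :=
      Finset.sum_le_sum (fun i _ => (root8_spec (c i) (ρ i) Δ _ (hc i) (hρ i) hΔ (h1 i) (by linarith)).2.2.1)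
    rw [Real.sq_sqrt (by linarith)]
    simp at this
    linarith
  have hle : (1 / 2 : ℝ) ≤ Real.sqrt k := by linarith
  obtain ⟨u, hu, hfu⟩ := intermediate_value_Icc' hle hcont ⟨hhi, hlo⟩
  have hu0 : 0 < u := by linarith [hu.1]
  refine ⟨u, fun i => root8 (c i) (ρ i) Δ u, ⟨hu0, ?_, ?_⟩, hu.1, hu.2⟩
  · simp only at hfu
    linarith
  · intro i
    exact (root8_spec (c i) (ρ i) Δ u (hc i) (hρ i) hΔ (h1 i) hu0).2

lemma sqdiff8 (w δ s T : ℝ) (hw : 0 ≤ w) (hδ : 0 ≤ δ) (hs : 0 < s)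
    (h : |w ^ 2 - (δ * s) ^ 2| ≤ T * δ ^ 3) : |w - δ * s| ≤ T / s * δ ^ 2 := by
  rcases hδ.eq_or_lt with h0 | hpos
  · subst h0
    simp at h ⊢
    exact h
  · have e : w ^ 2 - (δ * s) ^ 2 = (w - δ * s) * (w + δ * s) := by ring
    have hd : 0 < δ * s := by positivity
    rw [e, abs_mul, abs_of_pos (by linarith : 0 < w + δ * s)] at h
    have h2 : |w - δ * s| * (δ * s) ≤ T * δ ^ 3 :=
      le_trans (mul_le_mul_of_nonneg_left (by linarith) (abs_nonneg _)) h
    have h3 : (|w - δ * s|) * (δ * s) ≤ (T / s * δ ^ 2) * (δ * s) := by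
      have : (T / s * δ ^ 2) * (δ * s) = T * δ ^ 3 := by field_simp
      linarith
    exact le_of_mul_le_mul_right h3 hd

lemma w8 (c ρ δ u m x : ℝ) (hc : 0 < c) (hρ : 0 < ρ) (hδ : 0 ≤ δ) (hu : 1 / 2 ≤ u) (hum : u ≤ m)
    (hx : 0 < x) (hx1 : x ≤ 1)
    (ex : (1 - x) ^ 2 + ρ * δ ^ 2 * x * (1 - x) = c * δ ^ 2 * (u + 1 / u) * x) :
    1 - x ≤ Real.sqrt (c * (m + 2)) * δ := by
  have hr : 0 ≤ ρ * δ ^ 2 * x * (1 - x) :=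
        mul_nonneg (by positivity) (by linarith)
  have hu0 : 0 < u := by linarith
  have h1u : 1 / u ≤ 2 := by rw [div_le_iff₀ hu0]; linarith
  have h3 : c * δ ^ 2 * (u + 1 / u) * x ≤ c * δ ^ 2 * (m + 2) * 1 := by
    have hm2 : 0 ≤ m + 2 := by linarith
    gcongr
  apply (pow_le_pow_iff_left₀ (by linarith) (by positivity) two_ne_zero).1
  rw [mul_pow, Real.sq_sqrt (by apply mul_nonneg hc.le; linarith)]
  linarith

lemma w8' (c ρ δ u m x D E : ℝ) (hc : 0 < c) (hρ : 0 < ρ) (hδ : 0 ≤ δ) (hu : 1 / 2 ≤ u) (hum : u ≤ m)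
    (hm : 1 ≤ m) (hx : 0 < x) (hx1 : x ≤ 1) (hE : 0 ≤ E) (hD : 0 ≤ D)
    (ex : (1 - x) ^ 2 + ρ * δ ^ 2 * x * (1 - x) = c * δ ^ 2 * (u + 1 / u) * x)
    (hw : 1 - x ≤ E * δ) (hmu : m - u ≤ D * δ) :
    |(1 - x) - δ * (Real.sqrt c * Real.sqrt (m + 1 / m))| ≤
      (c * (3 * D + (m + 2) * E) + ρ * E) / (Real.sqrt c * Real.sqrt (m + 1 / m)) * δ ^ 2 := by
  have hu0 : 0 < u := by linarith
  have hm0 : 0 < m := by linarith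
  apply sqdiff8 _ _ _ _ (by linarith) hδ (by positivity)
  rw [mul_pow, mul_pow, Real.sq_sqrt hc.le, Real.sq_sqrt (by positivity)]
  have h1u : 1 / u ≤ 2 := by rw [div_le_iff₀ hu0]; linarith
  have key : |(u + 1 / u) * x - (m + 1 / m)| ≤ (3 * D + (m + 2) * E) * δ := by
    have e : (u + 1 / u) * x - (m + 1 / m) = - (u + 1 / u) * (1 - x) + ((u + 1 / u) - (m + 1 / m)) := by ring
    have e2 : (u + 1 / u) - (m + 1 / m) = (m - u) * (1 / u * (1 / m) - 1) := by field_simp; ring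
    have h1m : 1 / m ≤ 1 := by rw [div_le_iff₀ hm0]; linarith
    have hpm : 0 < 1 / m := by positivity
    have hpu : 0 < 1 / u := by positivity
    rw [e, e2]
    have a1 : |-(u + 1 / u) * (1 - x)| ≤ (m + 2) * (E * δ) := by
      rw [abs_mul, abs_neg, abs_of_pos (by linarith), abs_of_nonneg (by linarith)]
      apply mul_le_mul (by linarith) hw (by linarith) (by linarith)
    have a2 : |(m - u) * (1 / u * (1 / m) - 1)| ≤ D * δ * 3 := by
      rw [abs_mul, abs_of_nonneg (by linarith : 0 ≤ m - u)]
      apply mul_le_mul hmu _ (abs_nonneg _) (by positivity)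
      have : 1 / u * (1 / m) ≤ 2 * 1 := by gcongr
      have : 0 < 1 / u * (1 / m) := by positivity
      rw [abs_le]; constructor <;> linarith
    calc _ ≤ _ := abs_add_le _ _
      _ ≤ (m + 2) * (E * δ) + D * δ * 3 := add_le_add a1 a2
      _ = _ := by ring
  have e : (1 - x) ^ 2 - δ ^ 2 * (c * (m + 1 / m)) = c * δ ^ 2 * ((u + 1 / u) * x - (m + 1 / m))
      + -(ρ * δ ^ 2 * x * (1 - x)) := by linear_combination ex
  rw [e]
  have b1 : |c * δ ^ 2 * ((u + 1 / u) * x - (m + 1 / m))| ≤ c * δ ^ 2 * ((3 * D + (m + 2) * E) * δ) := by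
    rw [abs_mul, abs_of_nonneg (by positivity)]
    gcongr
  have b2 : |-(ρ * δ ^ 2 * x * (1 - x))| ≤ ρ * δ ^ 2 * 1 * (E * δ) := by
    rw [abs_neg, abs_of_nonneg (mul_nonneg (by positivity) (by linarith))]
    have : 0 ≤ 1 - x := by linarith
    gcongr
  calc _ ≤ _ := abs_add_le _ _
    _ ≤ _ := add_le_add b1 b2
    _ = _ := by ring

/-- Second order bound for the map `u ↦ u/(1+u²)` in terms of `u²`. -/
lemma phi8 (u m : ℝ) (hu : 1 / 2 ≤ u) (hum : u ≤ m) (hm : 1 ≤ m) :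
    |u / (1 + u ^ 2) - m / (1 + m ^ 2) - (m ^ 2 - 1) / (2 * m * (1 + m ^ 2) ^ 2) * (m ^ 2 - u ^ 2)|
      ≤ 20 * m ^ 4 * (m - u) ^ 2 := by
  have hm0 : 0 < m := by linarith
  have hu0 : 0 < u := by linarith
  have e : u / (1 + u ^ 2) - m / (1 + m ^ 2) - (m ^ 2 - 1) / (2 * m * (1 + m ^ 2) ^ 2) * (m ^ 2 - u ^ 2)
    = (m - u) ^ 2 * ((m ^ 2 - 1) * (u ^ 2 + 2 * m * u + 2 * m ^ 2 + 1) - 2 * m ^ 2 * (1 + m ^ 2))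
      / (2 * m * (1 + u ^ 2) * (1 + m ^ 2) ^ 2) := by
    field_simp
    ring
  rw [e, abs_div, abs_mul, abs_of_nonneg (sq_nonneg (m - u)),
    abs_of_pos (by positivity : 0 < 2 * m * (1 + u ^ 2) * (1 + m ^ 2) ^ 2)]
  have hm2 : 1 ≤ m ^ 2 := one_le_pow₀ hm
  have hnum : |(m ^ 2 - 1) * (u ^ 2 + 2 * m * u + 2 * m ^ 2 + 1) - 2 * m ^ 2 * (1 + m ^ 2)|
      ≤ 20 * m ^ 4 := by
    have p1 : 0 ≤ (m ^ 2 - 1) * (u ^ 2 + 2 * m * u + 2 * m ^ 2 + 1) :=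
      mul_nonneg (by linarith) (by positivity)
    have p2 : (m ^ 2 - 1) * (u ^ 2 + 2 * m * u + 2 * m ^ 2 + 1)
        ≤ m ^ 2 * (m ^ 2 + 2 * m * m + 2 * m ^ 2 + m ^ 2) := by
      gcongr
      linarith
    have p3 : 0 ≤ 2 * m ^ 2 * (1 + m ^ 2) := by positivity
    have p4 : 2 * m ^ 2 * (1 + m ^ 2) ≤ 2 * m ^ 2 * (m ^ 2 + m ^ 2) := by gcongr
    have p5 : 0 ≤ m ^ 4 := by positivity
    rw [abs_le]
    constructor <;> nlinarith
  have hden : 1 ≤ 2 * m * (1 + u ^ 2) * (1 + m ^ 2) ^ 2 := by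
    have q1 : 1 ≤ 2 * m := by linarith
    have q2 : 1 ≤ 1 + u ^ 2 := by nlinarith
    have q3 : 1 ≤ (1 + m ^ 2) ^ 2 := one_le_pow₀ (by linarith)
    exact one_le_mul_of_one_le_of_one_le (one_le_mul_of_one_le_of_one_le q1 q2) q3
  refine le_trans (div_le_self (by positivity) hden) ?_
  rw [mul_comm]
  gcongr

lemma core8 {k : ℕ} (hk : 1 ≤ k) (c ρ : Fin k → ℝ) (hc : ∀ i, 0 < c i) (hρ : ∀ i, 0 < ρ i) :
    ∃ ε > 0, ∃ C > 0, ∀ Δ : ℝ, 0 ≤ Δ → Δ < ε → ∃ u x, Sys8 c ρ Δ u x ∧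
      (∀ v y, Sys8 c ρ Δ v y → v = u ∧ y = x) ∧
      |u / (1 + u ^ 2) - (Real.sqrt k / (1 + Real.sqrt k ^ 2)
        + (Real.sqrt k ^ 2 - 1) / (2 * Real.sqrt k * (1 + Real.sqrt k ^ 2) ^ 2) *
          (Real.sqrt Δ * ((∑ i, Real.sqrt (c i)) * Real.sqrt (Real.sqrt k + 1 / Real.sqrt k))))|
        ≤ C * Δ := by
  have hk1 : (1 : ℝ) ≤ k := by exact_mod_cast hk
  have hm : 1 ≤ Real.sqrt k := Real.one_le_sqrt.2 hk1
  have hmk : Real.sqrt k ^ 2 = k := Real.sq_sqrt (by linarith)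
  set m := Real.sqrt k with hmdef
  have hm0 : 0 < m := by linarith
  have hSρ : 0 ≤ ∑ i, ρ i := Finset.sum_nonneg (fun i _ => (hρ i).le)
  have hSc : 0 ≤ ∑ i, c i := Finset.sum_nonneg (fun i _ => (hc i).le)
  set W := 1 + ∑ i, ρ i + 5 * ∑ i, c i with hW
  have hW0 : 0 < W := by linarith
  set E : Fin k → ℝ := fun i => Real.sqrt (c i * (m + 2)) with hE
  set D : ℝ := ∑ i, E i with hD
  have hE0 : ∀ i, 0 ≤ E i := fun i => Real.sqrt_nonneg _
  have hD0 : 0 ≤ D := Finset.sum_nonneg (fun i _ => hE0 i)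
  set F : Fin k → ℝ := fun i => (c i * (3 * D + (m + 2) * E i) + ρ i * E i) /
    (Real.sqrt (c i) * Real.sqrt (m + 1 / m)) with hF
  have hF0 : ∀ i, 0 ≤ F i := by
    intro i
    have := hc i; have := hρ i; have := hE0 i
    simp only [hF]; positivity
  set A := (m ^ 2 - 1) / (2 * m * (1 + m ^ 2) ^ 2) with hA
  refine ⟨1 / W, by positivity, 20 * m ^ 4 * D ^ 2 + |A| * ∑ i, F i + 1, ?_, ?_⟩
  · have : 0 ≤ ∑ i, F i := Finset.sum_nonneg (fun i _ => hF0 i)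
    positivity
  intro Δ hΔ hΔε
  rw [lt_div_iff₀ hW0] at hΔε
  have h1 : ∀ i, ρ i * Δ < 1 := by
    intro i
    have : ρ i ≤ ∑ i, ρ i := Finset.single_le_sum (fun j _ => (hρ j).le) (Finset.mem_univ i)
    have : ρ i * Δ ≤ W * Δ := mul_le_mul_of_nonneg_right (by linarith) hΔ
    linarith
  have h2 : ∀ i, 5 * c i * Δ < 1 := by
    intro i
    have : c i ≤ ∑ i, c i := Finset.single_le_sum (fun j _ => (hc j).le) (Finset.mem_univ i)
    have : (5 * c i) * Δ ≤ W * Δ := mul_le_mul_of_nonneg_right (by linarith) hΔ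
    linarith
  obtain ⟨u, x, hs, hu, hum⟩ := exist8 hk c ρ hc hρ Δ hΔ h1 h2
  refine ⟨u, x, hs, fun v y hy => uniq8 hk c ρ hc hρ Δ hΔ h1 v u y x hy hs, ?_⟩
  obtain ⟨hu0, sx, hx⟩ := hs
  set δ := Real.sqrt Δ with hδdef
  have hδ : 0 ≤ δ := Real.sqrt_nonneg _
  have hδ2 : Δ = δ ^ 2 := (Real.sq_sqrt hΔ).symm
  rw [hδ2] at hx ⊢
  have hw : ∀ i, 1 - x i ≤ E i * δ := fun i =>
    w8 (c i) (ρ i) δ u m (x i) (hc i) (hρ i) hδ hu hum (hx i).1 (hx i).2.1 (hx i).2.2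
  have hsum : m ^ 2 - u ^ 2 = ∑ i, (1 - x i) := by
    rw [Finset.sum_sub_distrib, sx, hmk]; simp
  have hmu : m - u ≤ D * δ := by
    have : ∑ i, (1 - x i) ≤ ∑ i, E i * δ := Finset.sum_le_sum (fun i _ => hw i)
    rw [← hsum, ← Finset.sum_mul] at this
    nlinarith
  have hw' : ∀ i, |(1 - x i) - δ * (Real.sqrt (c i) * Real.sqrt (m + 1 / m))| ≤ F i * δ ^ 2 := fun i =>
    w8' (c i) (ρ i) δ u m (x i) D (E i) (hc i) (hρ i) hδ hu hum hm (hx i).1 (hx i).2.1 (hE0 i) hD0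
      (hx i).2.2 (hw i) hmu
  have hdiff : |(m ^ 2 - u ^ 2) - δ * ((∑ i, Real.sqrt (c i)) * Real.sqrt (m + 1 / m))|
      ≤ (∑ i, F i) * δ ^ 2 := by
    rw [hsum, Finset.sum_mul, Finset.mul_sum, ← Finset.sum_sub_distrib, Finset.sum_mul]
    exact le_trans (Finset.abs_sum_le_sum_abs _ _) (Finset.sum_le_sum (fun i _ => hw' i))
  have hphi := phi8 u m hu hum hm
  have e : u / (1 + u ^ 2) - (m / (1 + m ^ 2) + A * (δ * ((∑ i, Real.sqrt (c i)) * Real.sqrt (m + 1 / m))))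
    = (u / (1 + u ^ 2) - m / (1 + m ^ 2) - A * (m ^ 2 - u ^ 2)) +
      A * ((m ^ 2 - u ^ 2) - δ * ((∑ i, Real.sqrt (c i)) * Real.sqrt (m + 1 / m))) := by ring
  rw [e]
  have g1 : |A * ((m ^ 2 - u ^ 2) - δ * ((∑ i, Real.sqrt (c i)) * Real.sqrt (m + 1 / m)))|
      ≤ |A| * ((∑ i, F i) * δ ^ 2) := by
    rw [abs_mul]; gcongr
  have g2 : 20 * m ^ 4 * (m - u) ^ 2 ≤ 20 * m ^ 4 * (D * δ) ^ 2 := by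
    have : 0 ≤ m - u := by linarith
    gcongr
  have := abs_add_le (u / (1 + u ^ 2) - m / (1 + m ^ 2) - A * (m ^ 2 - u ^ 2))
    (A * ((m ^ 2 - u ^ 2) - δ * ((∑ i, Real.sqrt (c i)) * Real.sqrt (m + 1 / m))))
  nlinarith [sq_nonneg δ]

lemma conv8 (r B b ρ γ Δ : ℝ) (hr : 0 < r) (hB : 0 < B) :
    (1 - ρ * Δ) * b ^ 2 * B ^ 2 - (2 - ρ * Δ + B * γ * Δ) * r ^ 2 * b * B
      + r ^ 4 * (1 - b * γ * Δ)
    = r ^ 4 * (((1 - b * B / r ^ 2) ^ 2 + ρ * Δ * (b * B / r ^ 2) * (1 - b * B / r ^ 2)) -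
      (γ * r) * Δ * (B / r + 1 / (B / r)) * (b * B / r ^ 2)) := by
  field_simp
  ring

lemma convsys8 {k : ℕ} (r Δ B : ℝ) (γ ρ b : Fin k → ℝ) (hr : 0 < r) :
    (B = ∑ j, b j ∧
      (∀ i, 0 = (1 - ρ i * Δ) * (b i) ^ 2 * B ^ 2
              - (2 - ρ i * Δ + B * γ i * Δ) * r ^ 2 * b i * B
              + r ^ 4 * (1 - b i * γ i * Δ)) ∧
          0 < B ∧
          (∀ i, 0 < b i * B ∧ b i * B ≤ r ^ 2)) ↔
    Sys8 (fun i => γ i * r) ρ Δ (B / r) (fun i => b i * B / r ^ 2) := by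
  have hr4 : r ^ 4 ≠ 0 := by positivity
  constructor
  · rintro ⟨h1, h2, h3, h4⟩
    refine ⟨by positivity, ?_, fun i => ⟨div_pos (h4 i).1 (by positivity), ?_, ?_⟩⟩
    · rw [← Finset.sum_div, ← Finset.sum_mul, ← h1]; ring
    · exact (div_le_one (by positivity)).2 (h4 i).2
    · have := h2 i
      rw [conv8 r B (b i) (ρ i) (γ i) Δ hr h3] at this
      have := (mul_eq_zero.1 this.symm).resolve_left hr4
      linarith
  · rintro ⟨h1, h2, h3⟩
    have hB : 0 < B := by
      have := mul_pos h1 hr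
      rwa [div_mul_cancel₀ _ hr.ne'] at this
    refine ⟨?_, fun i => ?_, hB, fun i => ⟨?_, ?_⟩⟩
    · rw [← Finset.sum_div, ← Finset.sum_mul, div_pow] at h2
      have h5 := (div_left_inj' (by positivity : r ^ 2 ≠ 0)).1 h2
      rw [sq] at h5
      exact (mul_right_cancel₀ hB.ne' h5).symm
    · rw [conv8 r B (b i) (ρ i) (γ i) Δ hr hB]
      have := (h3 i).2.2
      simp only at this
      rw [this]; ring
    · have := mul_pos (h3 i).1 (by positivity : 0 < r ^ 2)
      simp only at this
      rwa [div_mul_cancel₀ _ (by positivity)] at this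
    · exact (div_le_one (by positivity)).1 (h3 i).2.1

lemma coef8 (k : ℕ) (hk : 1 ≤ k) (r S δ : ℝ) (hr : 0 < r) :
    (1 / r) * ((Real.sqrt k ^ 2 - 1) / (2 * Real.sqrt k * (1 + Real.sqrt k ^ 2) ^ 2) *
          (δ * ((S * Real.sqrt r) * Real.sqrt (Real.sqrt k + 1 / Real.sqrt k))))
    = (k : ℝ) ^ ((1 : ℝ) / 4) * (k - 1) / (2 * ((1 : ℝ) + k) ^ ((3 : ℝ) / 2))
                * (S / k) * Real.sqrt (1 / r) * δ := by
  have hk1 : (1 : ℝ) ≤ k := by exact_mod_cast hk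
  have hk0 : (0 : ℝ) < k := by linarith
  have e1 : (k : ℝ) ^ ((1 : ℝ) / 4) = Real.sqrt (Real.sqrt k) := by
    rw [Real.sqrt_eq_rpow, Real.sqrt_eq_rpow, ← Real.rpow_mul hk0.le]; norm_num
  have e2 : ((1 : ℝ) + k) ^ ((3 : ℝ) / 2) = (1 + k) * Real.sqrt (1 + k) := by
    rw [Real.sqrt_eq_rpow, show (3 : ℝ) / 2 = 1 + 1 / 2 by norm_num,
      Real.rpow_add (by linarith), Real.rpow_one]
  have hm0 : 0 < Real.sqrt k := Real.sqrt_pos.2 hk0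
  have hmk : Real.sqrt k ^ 2 = k := Real.sq_sqrt hk0.le
  have e3 : Real.sqrt (Real.sqrt k + 1 / Real.sqrt k) = Real.sqrt (1 + k) / Real.sqrt (Real.sqrt k) := by
    rw [← Real.sqrt_div (by linarith)]
    congr 1
    field_simp
    linarith
  have e4 : Real.sqrt (1 / r) = Real.sqrt r / r := by
    rw [Real.sqrt_div zero_le_one, Real.sqrt_one, eq_div_iff hr.ne', div_mul_eq_mul_div, one_mul,
      Real.div_sqrt]
  rw [e1, e2, e3, e4]
  have hn : Real.sqrt (Real.sqrt k) ^ 2 = Real.sqrt k := Real.sq_sqrt hm0.le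
  have hn0 : 0 < Real.sqrt (Real.sqrt k) := Real.sqrt_pos.2 hm0
  have hq : Real.sqrt (1 + k) ^ 2 = 1 + k := Real.sq_sqrt (by linarith)
  have hq0 : 0 < Real.sqrt (1 + (k : ℝ)) := Real.sqrt_pos.2 (by linarith)
  rw [hmk]
  generalize Real.sqrt (1 + (k : ℝ)) = q at *
  generalize Real.sqrt (Real.sqrt k) = n at *
  rw [← hn]
  rw [← hn] at hmk
  have hk1' : (0 : ℝ) < 1 + k := by linarith
  generalize (k : ℝ) = K at *
  have hK : K = n ^ 4 := by rw [← hmk]; ring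
  rw [← hq]
  subst hK
  field_simp

/-- with `(β_Σ(Δt), β_1(Δt), …, β_k(Δt))` the unique solution of the
constrained system and `λ = β_Σσ_S²/(σ_K² + β_Σ²σ_S²)`, one has `λβ_Σ < 1` and
`λ = (k^{1/2}/(1+k))(σ_S/σ_K) + (k^{1/4}(k−1)/(2(1+k)^{3/2}))(1/k)Σ_j γ_j^{1/2}(σ_S/σ_K)^{1/2}√Δt + O(Δt)`. -/
theorem stmt8 (k : ℕ) (hk : 1 ≤ k) (σS σK : ℝ) (hσS : 0 < σS) (hσK : 0 < σK)
    (γ ρ : Fin k → ℝ) (hγ : ∀ i, 0 < γ i) (hρ : ∀ i, 0 < ρ i) :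
    ∃ ε > 0, ∃ C > 0, ∀ Δt : ℝ, 0 ≤ Δt → Δt < ε →
      ∃ (βSum : ℝ) (β : Fin k → ℝ),
        (βSum = ∑ j, β j ∧
          (∀ i, 0 = (1 - ρ i * Δt) * (β i) ^ 2 * βSum ^ 2
              - (2 - ρ i * Δt + βSum * γ i * Δt) * (σK / σS) ^ 2 * β i * βSum
              + (σK / σS) ^ 4 * (1 - β i * γ i * Δt)) ∧
          0 < βSum ∧
          (∀ i, 0 < β i * βSum ∧ β i * βSum ≤ σK ^ 2 / σS ^ 2)) ∧
        (∀ q : ℝ × (Fin k → ℝ),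
          (q.1 = ∑ j, q.2 j ∧
            (∀ i, 0 = (1 - ρ i * Δt) * (q.2 i) ^ 2 * q.1 ^ 2
                - (2 - ρ i * Δt + q.1 * γ i * Δt) * (σK / σS) ^ 2 * q.2 i * q.1
                + (σK / σS) ^ 4 * (1 - q.2 i * γ i * Δt)) ∧
            0 < q.1 ∧
            (∀ i, 0 < q.2 i * q.1 ∧ q.2 i * q.1 ≤ σK ^ 2 / σS ^ 2)) →
          q.1 = βSum ∧ q.2 = β) ∧
        (βSum * σS ^ 2 / (σK ^ 2 + βSum ^ 2 * σS ^ 2)) * βSum < 1 ∧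
        |βSum * σS ^ 2 / (σK ^ 2 + βSum ^ 2 * σS ^ 2) -
            (Real.sqrt k / (1 + k) * (σS / σK)
              + (k : ℝ) ^ ((1 : ℝ) / 4) * (k - 1) / (2 * ((1 : ℝ) + k) ^ ((3 : ℝ) / 2))
                * ((∑ j, Real.sqrt (γ j)) / k)
                * Real.sqrt (σS / σK) * Real.sqrt Δt)| ≤ C * Δt := by
  have hr : 0 < σK / σS := by positivity
  set r := σK / σS with hrdef
  have hr2 : σK ^ 2 / σS ^ 2 = r ^ 2 := by rw [hrdef, div_pow]
  have hinv : σS / σK = 1 / r := by rw [hrdef, one_div_div]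
  have hk1 : (1 : ℝ) ≤ k := by exact_mod_cast hk
  have hmk : Real.sqrt k ^ 2 = k := Real.sq_sqrt (by linarith)
  obtain ⟨ε, hε, C, hC, H⟩ := core8 hk (fun i => γ i * r) ρ (fun i => mul_pos (hγ i) hr) hρ
  refine ⟨ε, hε, C / r, by positivity, fun Δt h0 h1 => ?_⟩
  obtain ⟨u, x, hs, huniq, hest⟩ := H Δt h0 h1
  have hu : 0 < u := hs.1
  have eu : r * u / r = u := by field_simp
  have ex : (fun i => (r * x i / u) * (r * u) / r ^ 2) = x := by
    funext i; field_simp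
  rw [hr2]
  refine ⟨r * u, fun i => r * x i / u, ?_, ?_, ?_, ?_⟩
  · rw [convsys8 r Δt (r * u) γ ρ (fun i => r * x i / u) hr, eu, ex]
    exact hs
  · rintro ⟨B, b⟩ hq
    simp only at hq
    have hB : 0 < B := hq.2.2.1
    rw [convsys8 r Δt B γ ρ b hr] at hq
    obtain ⟨h2, h3⟩ := huniq _ _ hq
    have hBu : B = r * u := by rw [← h2]; field_simp
    refine ⟨hBu, ?_⟩
    funext i
    simp only
    rw [← h3, ← h2]
    field_simp
  · rw [div_mul_eq_mul_div, div_lt_one (by positivity)]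
    nlinarith [sq_nonneg (r * u * σS), pow_pos hσK 2]
  · have hl : r * u * σS ^ 2 / (σK ^ 2 + (r * u) ^ 2 * σS ^ 2) = 1 / r * (u / (1 + u ^ 2)) := by
      have : σK = r * σS := by rw [hrdef]; field_simp
      rw [this]
      clear_value r
      field_simp
    have hsq : ∑ i, Real.sqrt (γ i * r) = (∑ i, Real.sqrt (γ i)) * Real.sqrt r := by
      rw [Finset.sum_mul]
      exact Finset.sum_congr rfl (fun i _ => Real.sqrt_mul (hγ i).le r)
    rw [hl, hinv, ← coef8 k hk r _ _ hr, ← hsq]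
    have e : ∀ a b d : ℝ, 1 / r * a - (b * (1 / r) + 1 / r * d) = 1 / r * (a - (b + d)) := by
      intros; ring
    rw [e, abs_mul, abs_of_pos (by positivity : 0 < 1 / r)]
    rw [hmk] at hest ⊢
    calc _ ≤ 1 / r * (C * Δt) := by gcongr
      _ = _ := by ring
end

section
/- There exist ε > 0 and C > 0 such that for every Δt ∈ [0, ε), with (β_Σ(Δt), β_1(Δt), …, β_k(Δt)) the unique solution of the constrained system, λ(Δt) := β_Σ(Δt)σ_S²/(σ_K² + β_Σ(Δt)²σ_S²), φ_i(Δt) := 1 − λ(Δt)β_i(Δt)/(1 − λ(Δt)β_Σ(Δt)), and μ_i(Δt) := λ(Δt)φ_i(Δt), one has for each i ∈ {1,…,k}: |φ_i(Δt) − ((1+k)^{1/2}/k^{1/4})·γ_i^{1/2}(σ_K/σ_S)^{1/2}·√Δt| ≤ C·Δt and |μ_i(Δt) − (k^{1/4}/(1+k)^{1/2})·γ_i^{1/2}(σ_S/σ_K)^{1/2}·√Δt| ≤ C·Δt. -/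
lemma le_of_sq_le_sq_aux {a b : ℝ} (h : a ^ 2 ≤ b ^ 2) (hb : 0 ≤ b) : a ≤ b :=
  abs_le_of_sq_le_sq' h hb |>.2

/-- Normalised system: `B = β_Σ`, `x i = β i * B / r ^ 2`, `r = σK / σS`. -/
def NSol {k : ℕ} (r : ℝ) (γ ρ : Fin k → ℝ) (D B : ℝ) (x : Fin k → ℝ) : Prop :=
  0 < B ∧ B ^ 2 = r ^ 2 * ∑ i, x i ∧ (∀ i, 0 < x i ∧ x i ≤ 1) ∧
  ∀ i, (1 - x i) ^ 2 + ρ i * D * x i * (1 - x i) = γ i * D * (B + r ^ 2 / B) * x i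

lemma c_lower {r B : ℝ} (hr : 0 < r) (hB : 0 < B) : 2 * r ≤ B + r ^ 2 / B := by
  have : B + r ^ 2 / B - 2 * r = (B - r) ^ 2 / B := by field_simp; ring
  have h2 : 0 ≤ (B - r) ^ 2 / B := by positivity
  linarith

lemma c_upper {r B K : ℝ} (hr : 0 < r) (hB : 0 < B) (hK : 1 ≤ K)
    (h1 : r ^ 2 / 2 ≤ B ^ 2) (h2 : B ^ 2 ≤ r ^ 2 * K) : B + r ^ 2 / B ≤ 3 * r * K := by
  have hBK : B ≤ r * K := by
    apply le_of_sq_le_sq_aux ?_ (by positivity)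
    nlinarith [mul_nonneg (sq_nonneg r) (mul_nonneg (by linarith : 0 ≤ K) (by linarith : 0 ≤ K - 1))]
  have : r ^ 2 / B ≤ 2 * B := by
    rw [div_le_iff₀ hB]; nlinarith
  linarith

lemma c_lip {r B B' Y Y' : ℝ} (hr : 0 < r) (hB : 0 < B) (hB' : 0 < B')
    (h1 : r ^ 2 / 2 ≤ B ^ 2) (h1' : r ^ 2 / 2 ≤ B' ^ 2)
    (h2 : B ^ 2 = r ^ 2 * Y) (h2' : B' ^ 2 = r ^ 2 * Y') :
    |(B + r ^ 2 / B) - (B' + r ^ 2 / B')| ≤ r * |Y - Y'| := by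
  have hr2 : r / 2 ≤ B := by
    apply le_of_sq_le_sq_aux ?_ hB.le
    nlinarith
  have hr2' : r / 2 ≤ B' := by
    apply le_of_sq_le_sq_aux ?_ hB'.le
    nlinarith
  have hBB : r ^ 2 / 2 ≤ B * B' := by
    apply le_of_sq_le_sq_aux ?_ (by positivity)
    have := mul_le_mul h1 h1' (by positivity) (by positivity)
    nlinarith
  have e : (B + r ^ 2 / B) - (B' + r ^ 2 / B') = (B - B') * (1 - r ^ 2 / (B * B')) := by
    field_simp; ring
  have hq : |1 - r ^ 2 / (B * B')| ≤ 1 := by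
    have a : 0 ≤ r ^ 2 / (B * B') := by positivity
    have b : r ^ 2 / (B * B') ≤ 2 := by
      rw [div_le_iff₀ (by positivity)]; linarith
    rw [abs_le]; constructor <;> linarith
  rw [e, abs_mul]
  have h3 : |B - B'| * (B + B') = r ^ 2 * |Y - Y'| := by
    have e3 : (B - B') * (B + B') = r ^ 2 * (Y - Y') := by linear_combination h2 - h2'
    have e4 := congrArg abs e3
    rwa [abs_mul, abs_mul, abs_of_pos (add_pos hB hB'), abs_of_pos (pow_pos hr 2)] at e4
  have h4 : |B - B'| * r ≤ r * |Y - Y'| * r := by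
    have := mul_le_mul_of_nonneg_left (by linarith : r ≤ B + B') (abs_nonneg (B - B'))
    nlinarith
  have h5 := le_of_mul_le_mul_right h4 hr
  calc _ ≤ |B - B'| * 1 := by gcongr
    _ ≤ _ := by linarith

lemma apriori {k : ℕ} (hk : 1 ≤ k) {r G g R M m δ : ℝ} {γ ρ : Fin k → ℝ} (hr : 0 < r)
    (hγ : ∀ i, 0 < γ i) (hG : ∀ i, γ i ≤ G) (hg : ∀ i, g ≤ γ i) (hg0 : 0 < g)
    (hρ : ∀ i, 0 < ρ i) (hR : ∀ i, ρ i ≤ R)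
    (hM0 : 0 < M) (hM : 3 * G * r * k ≤ M ^ 2) (hm0 : 0 < m) (hm : m ^ 2 ≤ g * r / 2)
    (hδ : 0 ≤ δ) (s1 : 8 * G * r * δ ^ 2 < 1) (s2 : R * M * δ ≤ g * r)
    (s3 : M * δ ≤ 1 / 2) {B : ℝ} {x : Fin k → ℝ} (h : NSol r γ ρ (δ ^ 2) B x) :
    r ^ 2 / 2 ≤ B ^ 2 ∧ B ^ 2 ≤ r ^ 2 * k ∧ (∀ i, 1 - x i ≤ M * δ ∧ m * δ ≤ 1 - x i) := by
  obtain ⟨hB, hBx, hx, he⟩ := h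
  have hk' : (1 : ℝ) ≤ k := by exact_mod_cast hk
  have hG0 : 0 < G := (hγ ⟨0, hk⟩).trans_le (hG _)
  have hc := c_lower hr hB
  have hup : B ^ 2 ≤ r ^ 2 * k := by
    rw [hBx]
    gcongr
    calc ∑ i, x i ≤ ∑ i : Fin k, (1 : ℝ) := Finset.sum_le_sum fun i _ => (hx i).2
      _ = k := by simp
  have hlow : r ^ 2 / 2 ≤ B ^ 2 := by
    by_contra hcon
    push Not at hcon
    let i : Fin k := ⟨0, hk⟩
    have hxi : x i ≤ ∑ j, x j :=
      Finset.single_le_sum (f := x) (fun j _ => (hx j).1.le) (Finset.mem_univ i)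
    have hxB : r ^ 2 * x i ≤ B ^ 2 := by rw [hBx]; gcongr
    have hxi2 : x i < 1 / 2 := by
      have : r ^ 2 * x i < r ^ 2 * (1 / 2) := by linarith
      exact lt_of_mul_lt_mul_left this (by positivity)
    have hBr : B ≤ r := by
      apply le_of_sq_le_sq_aux ?_ hr.le
      nlinarith [sq_nonneg r]
    have e1 : (B + r ^ 2 / B) * x i ≤ 2 * r := by
      have : x i ≤ B ^ 2 / r ^ 2 := by rw [le_div_iff₀ (by positivity)]; linarith
      calc (B + r ^ 2 / B) * x i ≤ (B + r ^ 2 / B) * (B ^ 2 / r ^ 2) := by gcongr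
        _ = B * (B ^ 2 / r ^ 2) + B := by field_simp
        _ ≤ B * 1 + B := by
            gcongr
            rw [div_le_one (by positivity)]
            gcongr
        _ ≤ 2 * r := by linarith
    have e2 : γ i * δ ^ 2 * ((B + r ^ 2 / B) * x i) ≤ G * δ ^ 2 * (2 * r) := by
      have := hG i
      have := hγ i
      have := (hx i).1
      gcongr
    have e3 : 0 ≤ ρ i * δ ^ 2 * x i * (1 - x i) := by
      have := hρ i
      have := (hx i).1
      have : 0 ≤ 1 - x i := by linarith
      positivity
    have := he i
    nlinarith
  refine ⟨hlow, hup, fun i => ?_⟩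
  have hcu := c_upper hr hB hk' hlow hup
  have hxi := hx i
  have hy : 0 ≤ 1 - x i := by linarith
  have hei := he i
  have hgi := hγ i
  have hGi := hG i
  have hri := hρ i
  have a1 : 1 - x i ≤ M * δ := by
    apply le_of_sq_le_sq_aux ?_ (by positivity)
    have e3 : 0 ≤ ρ i * δ ^ 2 * x i * (1 - x i) := by
      have := hxi.1
      positivity
    have e2 : γ i * δ ^ 2 * (B + r ^ 2 / B) * x i ≤ G * δ ^ 2 * (3 * r * k) * 1 := by
      have := hxi.1
      have := hxi.2
      gcongr
    have e4 : 3 * G * r * k * δ ^ 2 ≤ M ^ 2 * δ ^ 2 := by gcongr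
    nlinarith
  refine ⟨a1, ?_⟩
  apply le_of_sq_le_sq_aux ?_ hy
  have b1 : ρ i * (1 - x i) ≤ g * r := by
    calc _ ≤ R * (M * δ) := by
          have := hR i
          gcongr
          linarith
      _ ≤ _ := by linarith
  have b2 : g * (2 * r) ≤ γ i * (B + r ^ 2 / B) := by
    have := hg i
    gcongr
  have b3 : δ ^ 2 * (1 / 2) * (g * r) ≤ δ ^ 2 * x i * (γ i * (B + r ^ 2 / B) - ρ i * (1 - x i)) := by
    have : 1 / 2 ≤ x i := by linarith
    have := hxi.1
    gcongr
    linarith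
  have b4 : m ^ 2 * δ ^ 2 ≤ g * r / 2 * δ ^ 2 := by gcongr
  nlinarith

lemma uniq_s9 {k : ℕ} (hk : 1 ≤ k) {r G g R M m δ : ℝ} {γ ρ : Fin k → ℝ} (hr : 0 < r)
    (hγ : ∀ i, 0 < γ i) (hG : ∀ i, γ i ≤ G) (hg : ∀ i, g ≤ γ i) (hg0 : 0 < g)
    (hρ : ∀ i, 0 < ρ i) (hR : ∀ i, ρ i ≤ R)
    (hM0 : 0 < M) (hM : 3 * G * r * k ≤ M ^ 2) (hm0 : 0 < m) (hm : m ^ 2 ≤ g * r / 2)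
    (hδ : 0 ≤ δ) (s1 : 8 * G * r * δ ^ 2 < 1) (s2 : R * M * δ ≤ g * r)
    (s3 : M * δ ≤ 1 / 2) (s4 : k * (G * r * δ) < 2 * m)
    {B B' : ℝ} {x x' : Fin k → ℝ} (h : NSol r γ ρ (δ ^ 2) B x)
    (h' : NSol r γ ρ (δ ^ 2) B' x') : B = B' ∧ x = x' := by
  obtain ⟨p1, p2, p3⟩ := apriori hk hr hγ hG hg hg0 hρ hR hM0 hM hm0 hm hδ s1 s2 s3 h
  obtain ⟨q1, q2, q3⟩ := apriori hk hr hγ hG hg hg0 hρ hR hM0 hM hm0 hm hδ s1 s2 s3 h'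
  obtain ⟨hB, hBx, hx, he⟩ := h
  obtain ⟨hB', hBx', hx', he'⟩ := h'
  have hG0 : 0 < G := (hγ ⟨0, hk⟩).trans_le (hG _)
  suffices hxx : x = x' by
    refine ⟨?_, hxx⟩
    subst hxx
    have : B ^ 2 = B' ^ 2 := by rw [hBx, hBx']
    exact (pow_left_inj₀ hB.le hB'.le (by norm_num)).1 this
  rcases hδ.eq_or_lt with h0 | hδ
  · subst h0
    funext i
    have := p3 i
    have := q3 i
    have := hx i
    have := hx' i
    linarith
  set Y := ∑ i, x i with hY
  set Y' := ∑ i, x' i with hY'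
  have hl := c_lip hr hB hB' p1 q1 hBx hBx'
  set c := B + r ^ 2 / B with hc
  set c' := B' + r ^ 2 / B' with hc'
  have hc0 : 0 < c' := by positivity
  have key : ∀ i, |x i - x' i| * (2 * m) ≤ G * r * δ * |Y - Y'| := by
    intro i
    have e : (x i - x' i) * ((1 - x i) + (1 - x' i) + ρ i * δ ^ 2 * (x i + x' i - 1)
        + γ i * δ ^ 2 * c') = -(γ i * δ ^ 2 * x i) * (c - c') := by
      linear_combination (he' i) - (he i)
    have hri := hρ i
    have hgi := hγ i
    have br : 2 * m * δ ≤ (1 - x i) + (1 - x' i) + ρ i * δ ^ 2 * (x i + x' i - 1)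
        + γ i * δ ^ 2 * c' := by
      have := p3 i
      have := q3 i
      have : 0 ≤ x i + x' i - 1 := by linarith
      have : 0 ≤ ρ i * δ ^ 2 * (x i + x' i - 1) := by positivity
      have : 0 ≤ γ i * δ ^ 2 * c' := by positivity
      linarith
    have e' := congrArg abs e
    rw [abs_mul, abs_mul, abs_neg, abs_of_nonneg (a := γ i * δ ^ 2 * x i)
      (by have := (hx i).1; positivity), abs_of_nonneg (le_trans (by positivity) br)] at e'
    have : |x i - x' i| * (2 * m * δ) ≤ G * δ ^ 2 * 1 * (r * |Y - Y'|) := by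
      calc _ ≤ _ := mul_le_mul_of_nonneg_left br (abs_nonneg _)
        _ = _ := e'
        _ ≤ _ := by
          have := hG i
          have := hx i
          have := this.1
          have := (hx i).2
          gcongr
    refine le_of_mul_le_mul_right ?_ hδ
    nlinarith
  have hsum : |Y - Y'| * (2 * m) ≤ k * (G * r * δ) * |Y - Y'| := by
    calc |Y - Y'| * (2 * m) ≤ (∑ i, |x i - x' i|) * (2 * m) := by
          rw [hY, hY', ← Finset.sum_sub_distrib]
          gcongr
          exact Finset.abs_sum_le_sum_abs _ _
      _ = ∑ i, |x i - x' i| * (2 * m) := by rw [Finset.sum_mul]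
      _ ≤ ∑ i : Fin k, G * r * δ * |Y - Y'| := Finset.sum_le_sum fun i _ => key i
      _ = _ := by simp; ring
  have hz : |Y - Y'| = 0 := by
    by_contra hne
    have : 0 < |Y - Y'| := lt_of_le_of_ne (abs_nonneg _) (Ne.symm hne)
    nlinarith
  funext i
  have := key i
  rw [hz] at this
  have h3 : |x i - x' i| ≤ 0 := by
    by_contra hcon
    push Not at hcon
    nlinarith [mul_pos hcon hm0]
  have := abs_nonpos_iff.1 h3
  linarith

/-- explicit smaller root of `a x² - (1 + a + t) x + 1`. -/
noncomputable def xroot (a t : ℝ) : ℝ := 2 / ((1 + a + t) + Real.sqrt ((1 + a + t) ^ 2 - 4 * a))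

lemma xroot_spec {a t : ℝ} (ha : 0 ≤ a) (ha1 : a ≤ 1) (ht : 0 ≤ t) :
    0 < xroot a t ∧ xroot a t ≤ 1 ∧ 
      (1 - xroot a t) ^ 2 + (1 - a) * xroot a t * (1 - xroot a t) = t * xroot a t := by
  have hD : (1 - a) ^ 2 ≤ (1 + a + t) ^ 2 - 4 * a := by nlinarith
  have hs := Real.le_sqrt_of_sq_le hD
  have hsq := Real.sq_sqrt (le_trans (sq_nonneg _) hD)
  unfold xroot
  set S := Real.sqrt ((1 + a + t) ^ 2 - 4 * a)
  have hS0 : 0 ≤ S := Real.sqrt_nonneg _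
  have hp : 0 < 1 + a + t + S := by linarith
  refine ⟨by positivity, ?_, ?_⟩
  · rw [div_le_one hp]; linarith
  · field_simp
    linear_combination hsq

lemma exist {k : ℕ} (hk : 1 ≤ k) {r G R M δ : ℝ} {γ ρ : Fin k → ℝ} (hr : 0 < r)
    (hγ : ∀ i, 0 < γ i) (hG : ∀ i, γ i ≤ G) 
    (hρ : ∀ i, 0 < ρ i) (hR : ∀ i, ρ i ≤ R)
    (hM0 : 0 < M) (hM : 3 * G * r * k ≤ M ^ 2) 
    (hδ : 0 ≤ δ) (s3 : k * (M * δ) ≤ 1 / 2) (s5 : R * δ ^ 2 ≤ 1) :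
    ∃ B x, NSol r γ ρ (δ ^ 2) B x := by
  have hk' : (1 : ℝ) ≤ k := by exact_mod_cast hk
  have hG0 : 0 < G := (hγ ⟨0, hk⟩).trans_le (hG _)
  let X : ℝ → Fin k → ℝ := fun Y i =>
    xroot (1 - ρ i * δ ^ 2) (γ i * δ ^ 2 * (r * Real.sqrt Y + r ^ 2 / (r * Real.sqrt Y)))
  have hX : ∀ Y : ℝ, 0 < Y → ∀ i, _ := fun Y hY i =>
    xroot_spec (a := 1 - ρ i * δ ^ 2)
      (t := γ i * δ ^ 2 * (r * Real.sqrt Y + r ^ 2 / (r * Real.sqrt Y)))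
      (by have := mul_le_mul_of_nonneg_right (hR i) (sq_nonneg δ); linarith)
      (by have := hρ i; have : 0 ≤ ρ i * δ ^ 2 := by positivity
          linarith)
      (by have := hγ i; positivity)
  have hcont : ContinuousOn (fun Y => ∑ i, X Y i - Y) (Set.Icc (1 / 2) (k : ℝ)) := by
    apply ContinuousOn.sub _ continuousOn_id
    apply continuousOn_finsetSum
    intro i _
    have hin : ContinuousOn (fun Y : ℝ => γ i * δ ^ 2 * (r * Real.sqrt Y + r ^ 2 / (r * Real.sqrt Y)))
        (Set.Icc (1 / 2) (k : ℝ)) := by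
      apply ContinuousOn.mul continuousOn_const
      apply ContinuousOn.add (by fun_prop)
      apply ContinuousOn.div continuousOn_const (by fun_prop)
      intro Y hY
      have : 0 < Y := by linarith [hY.1]
      positivity
    simp only [X, xroot]
    apply ContinuousOn.div continuousOn_const
    · apply ContinuousOn.add (by fun_prop)
      apply ContinuousOn.sqrt
      fun_prop
    · intro Y hY
      have hY0 : 0 < Y := by linarith [hY.1]
      have := (hX Y hY0 i).1
      unfold xroot at this
      intro h0
      rw [h0] at this
      simp at this
  have hle : (1 / 2 : ℝ) ≤ k := by linarith
  have hiv := intermediate_value_Icc' hle hcont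
  have h0 : (0 : ℝ) ∈ Set.Icc ((fun Y => ∑ i, X Y i - Y) (k : ℝ)) ((fun Y => ∑ i, X Y i - Y) (1 / 2)) := by
    constructor
    · simp only [sub_nonpos]
      calc ∑ i, X k i ≤ ∑ i : Fin k, (1 : ℝ) :=
            Finset.sum_le_sum fun i _ => (hX k (by linarith) i).2.1
        _ = k := by simp
    · simp only [sub_nonneg]
      have hh : ∀ i, 1 - M * δ ≤ X (1 / 2) i := by
        intro i
        obtain ⟨u1, u2, u3⟩ := hX (1 / 2) (by norm_num) i
        change 0 < X (1 / 2) i at u1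
        change X (1 / 2) i ≤ 1 at u2
        have hB : 0 < r * Real.sqrt (1 / 2) := by positivity
        have hB2 : (r * Real.sqrt (1 / 2)) ^ 2 = r ^ 2 / 2 := by
          rw [mul_pow, Real.sq_sqrt (by norm_num)]; ring
        have hcu := c_upper hr hB hk' hB2.ge (by rw [hB2]; nlinarith [sq_nonneg r])
        set c := r * Real.sqrt (1 / 2) + r ^ 2 / (r * Real.sqrt (1 / 2))
        have u3 : (1 - X (1 / 2) i) ^ 2 + (1 - (1 - ρ i * δ ^ 2)) * X (1 / 2) i * (1 - X (1 / 2) i)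
          = γ i * δ ^ 2 * c * X (1 / 2) i := u3
        set z := X (1 / 2) i
        have hz : 0 ≤ 1 - z := by linarith
        have : 1 - z ≤ M * δ := by
          apply le_of_sq_le_sq_aux ?_ (by positivity)
          have hri := hρ i
          have hgi := hγ i
          have hGi := hG i
          have e3 : 0 ≤ ρ i * δ ^ 2 * z * (1 - z) := by positivity
          have e2 : γ i * δ ^ 2 * c * z ≤ G * δ ^ 2 * (3 * r * k) * 1 := by gcongr
          have e4 : 3 * G * r * k * δ ^ 2 ≤ M ^ 2 * δ ^ 2 := by gcongr
          nlinarith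
        linarith
      calc (1 / 2 : ℝ) ≤ k * (1 - M * δ) := by linarith
        _ = ∑ i : Fin k, (1 - M * δ) := by simp; ring
        _ ≤ _ := Finset.sum_le_sum fun i _ => hh i
  obtain ⟨Y, hY, hY0⟩ := hiv h0
  have hYp : 0 < Y := by linarith [hY.1]
  refine ⟨r * Real.sqrt Y, X Y, by positivity, ?_, ?_, ?_⟩
  · rw [mul_pow, Real.sq_sqrt hYp.le]
    simp only at hY0
    rw [sub_eq_zero.1 hY0]
  · exact fun i => ⟨(hX Y hYp i).1, (hX Y hYp i).2.1⟩
  · intro i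
    have u3 := (hX Y hYp i).2.2
    change (1 - X Y i) ^ 2 + (1 - (1 - ρ i * δ ^ 2)) * X Y i * (1 - X Y i) = _ at u3
    rw [sub_sub_cancel] at u3
    exact u3

set_option maxHeartbeats 1000000 in
lemma asym {k : ℕ} (hk : 1 ≤ k) {r G g R M m δ : ℝ} {γ ρ : Fin k → ℝ} (hr : 0 < r)
    (hγ : ∀ i, 0 < γ i) (hG : ∀ i, γ i ≤ G) (hg : ∀ i, g ≤ γ i) (hg0 : 0 < g)
    (hρ : ∀ i, 0 < ρ i) (hR : ∀ i, ρ i ≤ R)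
    (hM0 : 0 < M) (hM : 3 * G * r * k ≤ M ^ 2) (hm0 : 0 < m) (hm : m ^ 2 ≤ g * r / 2)
    (hδ : 0 ≤ δ) (s1 : 8 * G * r * δ ^ 2 < 1) (s2 : R * M * δ ≤ g * r)
    (s3 : M * δ ≤ 1 / 2)
    {B Bk : ℝ} {x : Fin k → ℝ} (h : NSol r γ ρ (δ ^ 2) B x) (hBk : 0 < Bk)
    (hBk2 : Bk ^ 2 = r ^ 2 * k) (i : Fin k) {a : ℝ} (ha : 0 ≤ a)
    (ha2 : a ^ 2 = γ i * (Bk + r ^ 2 / Bk)) :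
    |1 - x i - a * δ| ≤ M * (4 * G * r * k + R) / m * δ ^ 2 ∧
    |(1 - x i) / (B + r ^ 2 / B) - a / (Bk + r ^ 2 / Bk) * δ| ≤
      (M * (4 * G * r * k + R) / m / (2 * r) + M * (r * (k * M)) / (2 * r * (2 * r))) * δ ^ 2 := by
  obtain ⟨p1, p2, p3⟩ := apriori hk hr hγ hG hg hg0 hρ hR hM0 hM hm0 hm hδ s1 s2 s3 h
  obtain ⟨hB, hBx, hx, he⟩ := h
  have hk' : (1 : ℝ) ≤ k := by exact_mod_cast hk
  have hG0 : 0 < G := (hγ ⟨0, hk⟩).trans_le (hG _)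
  have hR0 : 0 < R := (hρ ⟨0, hk⟩).trans_le (hR _)
  have pk : r ^ 2 / 2 ≤ Bk ^ 2 := by rw [hBk2]; nlinarith [sq_nonneg r]
  have hl := c_lip hr hB hBk p1 pk hBx hBk2
  have hY : |∑ i, x i - (k : ℝ)| ≤ k * (M * δ) := by
    have : ∑ i, x i - (k : ℝ) = - ∑ i, (1 - x i) := by simp
    rw [this, abs_neg, abs_of_nonneg (Finset.sum_nonneg fun i _ => by linarith [(hx i).2])]
    calc _ ≤ ∑ i : Fin k, M * δ := Finset.sum_le_sum fun i _ => (p3 i).1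
      _ = _ := by simp
  have c1 := c_lower hr hB
  have c2 := c_upper hr hB hk' p1 p2
  have d1 := c_lower hr hBk
  have d2 := c_upper hr hBk hk' pk hBk2.le
  have hei := he i
  set c := B + r ^ 2 / B
  set ck := Bk + r ^ 2 / Bk
  have hcc : |c - ck| ≤ r * (k * (M * δ)) := hl.trans (by gcongr)
  obtain ⟨y1, y2⟩ := p3 i
  obtain ⟨x1, x2⟩ := hx i
  have hgi := hγ i
  have hGi := hG i
  have hri := hρ i
  have hRi := hR i
  have hy0 : 0 ≤ 1 - x i := by linarith
  have hc0 : 0 < c := by linarith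
  have hck0 : 0 < ck := by linarith
  have haM : a ≤ M := by
    apply le_of_sq_le_sq_aux ?_ hM0.le
    rw [ha2]
    calc γ i * ck ≤ G * (3 * r * k) := by gcongr
      _ ≤ _ := by linarith
  have P1 : |1 - x i - a * δ| ≤ M * (4 * G * r * k + R) / m * δ ^ 2 := by
    rcases hδ.eq_or_lt with h0 | hδ'
    · subst h0
      have : 1 - x i = 0 := by linarith
      simp [this]
    have e : (1 - x i - a * δ) * (1 - x i + a * δ) =
        δ ^ 2 * (γ i * (c - ck) - γ i * c * (1 - x i) - ρ i * x i * (1 - x i)) := by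
      linear_combination hei - δ ^ 2 * ha2
    have e1 : |γ i * (c - ck) - γ i * c * (1 - x i) - ρ i * x i * (1 - x i)| ≤
        M * (4 * G * r * k + R) * δ := by
      have t1 : |γ i * (c - ck)| ≤ G * (r * (k * (M * δ))) := by
        rw [abs_mul, abs_of_pos hgi]; gcongr
      have t2 : γ i * c * (1 - x i) ≤ G * (3 * r * k) * (M * δ) := by gcongr
      have t3 : ρ i * x i * (1 - x i) ≤ R * 1 * (M * δ) := by gcongr
      have t2' : 0 ≤ γ i * c * (1 - x i) := by positivity
      have t3' : 0 ≤ ρ i * x i * (1 - x i) := by positivity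
      rw [abs_le] at t1 ⊢
      have hp : 0 ≤ R * 1 * (M * δ) := by positivity
      have hp2 : 0 ≤ G * (3 * r * k) * (M * δ) := by positivity
      constructor <;> linarith [t1.1, t1.2]
    have e2 := congrArg abs e
    rw [abs_mul, abs_mul, abs_of_nonneg (a := 1 - x i + a * δ) (by positivity),
      abs_of_nonneg (sq_nonneg δ)] at e2
    have e3 : |1 - x i - a * δ| * (m * δ) ≤ δ ^ 2 * (M * (4 * G * r * k + R) * δ) := by
      calc _ ≤ |1 - x i - a * δ| * (1 - x i + a * δ) := by
            gcongr
            have : 0 ≤ a * δ := by positivity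
            linarith
        _ = _ := e2
        _ ≤ _ := by gcongr
    have e4 : |1 - x i - a * δ| * m ≤ M * (4 * G * r * k + R) * δ ^ 2 := by
      refine le_of_mul_le_mul_right ?_ hδ'
      linarith
    rw [div_mul_eq_mul_div, le_div_iff₀ hm0]
    exact e4
  refine ⟨P1, ?_⟩
  have e : (1 - x i) / c - a / ck * δ = (1 - x i - a * δ) / c + a * δ * (ck - c) / (c * ck) := by
    field_simp; ring
  rw [e]
  refine (abs_add_le _ _).trans ?_
  rw [add_mul (M * (4 * G * r * k + R) / m / (2 * r))]
  apply add_le_add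
  · rw [abs_div, abs_of_pos hc0]
    calc _ ≤ (M * (4 * G * r * k + R) / m * δ ^ 2) / (2 * r) := by gcongr
      _ = _ := by ring
  · rw [abs_div, abs_of_pos (mul_pos hc0 hck0), abs_mul, abs_of_nonneg (a := a * δ) (by positivity),
      abs_sub_comm]
    calc _ ≤ M * δ * (r * (k * (M * δ))) / (2 * r * (2 * r)) := by gcongr
      _ = _ := by ring

lemma to_nsol {k : ℕ} {r D B : ℝ} {γ ρ β : Fin k → ℝ} (hr : 0 < r)
    (h1 : B = ∑ j, β j)
    (h2 : ∀ i, 0 = (1 - ρ i * D) * (β i) ^ 2 * B ^ 2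
              - (2 - ρ i * D + B * γ i * D) * r ^ 2 * β i * B
              + r ^ 4 * (1 - β i * γ i * D)) (h3 : 0 < B)
    (h4 : ∀ i, 0 < β i * B ∧ β i * B ≤ r ^ 2) :
    NSol r γ ρ D B (fun i => β i * B / r ^ 2) := by
  refine ⟨h3, ?_, ?_, ?_⟩
  · rw [← Finset.sum_div, ← Finset.sum_mul, ← h1]
    field_simp
  · intro i
    refine ⟨div_pos (h4 i).1 (by positivity), ?_⟩
    rw [div_le_one (by positivity)]
    exact (h4 i).2
  · intro i
    have := h2 i
    field_simp
    linear_combination -this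

lemma of_nsol {k : ℕ} {r D B : ℝ} {γ ρ x : Fin k → ℝ} (hr : 0 < r)
    (h : NSol r γ ρ D B x) :
    B = ∑ j, r ^ 2 * x j / B ∧
    (∀ i, 0 = (1 - ρ i * D) * (r ^ 2 * x i / B) ^ 2 * B ^ 2
              - (2 - ρ i * D + B * γ i * D) * r ^ 2 * (r ^ 2 * x i / B) * B
              + r ^ 4 * (1 - (r ^ 2 * x i / B) * γ i * D)) ∧ 0 < B ∧
    (∀ i, 0 < r ^ 2 * x i / B * B ∧ r ^ 2 * x i / B * B ≤ r ^ 2) := by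
  obtain ⟨hB, hBx, hx, he⟩ := h
  refine ⟨?_, ?_, hB, ?_⟩
  · rw [← Finset.sum_div, ← Finset.mul_sum, ← hBx]
    field_simp
  · intro i
    have := he i
    field_simp at this ⊢
    linear_combination -r ^ 4 * this
  · intro i
    rw [div_mul_cancel₀ _ hB.ne']
    have := hx i
    constructor
    · have := this.1
      positivity
    · have := this.2
      nlinarith [sq_nonneg r]


/-- with `(β_Σ, β_1, …, β_k)` the unique solution of the constrained
system, `λ = β_Σσ_S²/(σ_K²+β_Σ²σ_S²)`, `φ_i = 1 − λβ_i/(1−λβ_Σ)`, `μ_i = λφ_i`, one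
has `φ_i = ((1+k)^{1/2}/k^{1/4})γ_i^{1/2}(σ_K/σ_S)^{1/2}√Δt + O(Δt)` and
`μ_i = (k^{1/4}/(1+k)^{1/2})γ_i^{1/2}(σ_S/σ_K)^{1/2}√Δt + O(Δt)`. -/
theorem stmt9 (k : ℕ) (hk : 1 ≤ k) (σS σK : ℝ) (hσS : 0 < σS) (hσK : 0 < σK)
    (γ ρ : Fin k → ℝ) (hγ : ∀ i, 0 < γ i) (hρ : ∀ i, 0 < ρ i) :
    ∃ ε > 0, ∃ C > 0, ∀ Δt : ℝ, 0 ≤ Δt → Δt < ε →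
      ∃ (βSum lam : ℝ) (β φ μ : Fin k → ℝ),
        (βSum = ∑ j, β j ∧
          (∀ i, 0 = (1 - ρ i * Δt) * (β i) ^ 2 * βSum ^ 2
              - (2 - ρ i * Δt + βSum * γ i * Δt) * (σK / σS) ^ 2 * β i * βSum
              + (σK / σS) ^ 4 * (1 - β i * γ i * Δt)) ∧
          0 < βSum ∧
          (∀ i, 0 < β i * βSum ∧ β i * βSum ≤ σK ^ 2 / σS ^ 2)) ∧
        (∀ q : ℝ × (Fin k → ℝ),
          (q.1 = ∑ j, q.2 j ∧
            (∀ i, 0 = (1 - ρ i * Δt) * (q.2 i) ^ 2 * q.1 ^ 2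
                - (2 - ρ i * Δt + q.1 * γ i * Δt) * (σK / σS) ^ 2 * q.2 i * q.1
                + (σK / σS) ^ 4 * (1 - q.2 i * γ i * Δt)) ∧
            0 < q.1 ∧
            (∀ i, 0 < q.2 i * q.1 ∧ q.2 i * q.1 ≤ σK ^ 2 / σS ^ 2)) →
          q.1 = βSum ∧ q.2 = β) ∧
        lam = βSum * σS ^ 2 / (σK ^ 2 + βSum ^ 2 * σS ^ 2) ∧
        (∀ i, φ i = 1 - lam * β i / (1 - lam * βSum)) ∧
        (∀ i, μ i = lam * φ i) ∧
        (∀ i, |φ i - Real.sqrt (1 + k) / (k : ℝ) ^ ((1 : ℝ) / 4)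
              * Real.sqrt (γ i) * Real.sqrt (σK / σS) * Real.sqrt Δt| ≤ C * Δt) ∧
        (∀ i, |μ i - (k : ℝ) ^ ((1 : ℝ) / 4) / Real.sqrt (1 + k)
              * Real.sqrt (γ i) * Real.sqrt (σS / σK) * Real.sqrt Δt| ≤ C * Δt) := by
  have hk' : (1 : ℝ) ≤ k := by exact_mod_cast hk
  have hk0 : (0 : ℝ) < k := by linarith
  obtain ⟨G, hG⟩ : ∃ G, ∀ i, γ i ≤ G := by
    obtain ⟨G, hG⟩ := (Set.finite_range γ).bddAbove
    exact ⟨G, fun i => hG ⟨i, rfl⟩⟩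
  obtain ⟨R, hR⟩ : ∃ R, ∀ i, ρ i ≤ R := by
    obtain ⟨R, hR⟩ := (Set.finite_range ρ).bddAbove
    exact ⟨R, fun i => hR ⟨i, rfl⟩⟩
  have : Nonempty (Fin k) := ⟨⟨0, hk⟩⟩
  obtain ⟨i0, hi0⟩ := Finite.exists_min γ
  have hg0 : 0 < γ i0 := hγ i0
  generalize γ i0 = g at hi0 hg0
  have hG0 : 0 < G := (hγ ⟨0, hk⟩).trans_le (hG _)
  have hR0 : 0 < R := (hρ ⟨0, hk⟩).trans_le (hR _)
  obtain ⟨r, hrdef⟩ : ∃ r, r = σK / σS := ⟨_, rfl⟩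
  have hr : 0 < r := by rw [hrdef]; positivity
  obtain ⟨M, hM0, hM⟩ : ∃ M : ℝ, 0 < M ∧ 3 * G * r * k ≤ M ^ 2 :=
    ⟨√(3 * G * r * k), by positivity, (Real.sq_sqrt (by positivity)).ge⟩
  obtain ⟨m, hm0, hm⟩ : ∃ m : ℝ, 0 < m ∧ m ^ 2 ≤ g * r / 2 :=
    ⟨√(g * r / 2), by positivity, (Real.sq_sqrt (by positivity)).le⟩
  have hev : ∀ᶠ D in nhds (0 : ℝ), 8 * G * r * (√D) ^ 2 < 1 ∧ R * M * √D < g * r ∧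
      k * (M * √D) < 1 / 2 ∧ k * (G * r * √D) < 2 * m ∧ R * (√D) ^ 2 < 1 := by
    have aux : ∀ (f : ℝ → ℝ) (b : ℝ), Continuous f → f 0 < b → ∀ᶠ D in nhds (0 : ℝ), f D < b :=
      fun f b hf hb => hf.continuousAt.eventually_lt continuousAt_const hb
    refine (aux _ _ (by fun_prop) (by simp)).and ((aux _ _ (by fun_prop) ?_).and
      ((aux _ _ (by fun_prop) (by simp)).and ((aux _ _ (by fun_prop) ?_).and
      (aux _ _ (by fun_prop) (by simp)))))
    · simp; positivity
    · simp; positivity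
  obtain ⟨ε, hε, hball⟩ := Metric.eventually_nhds_iff.1 hev
  have hC1 : 0 < M * (4 * G * r * k + R) / m := by positivity
  have hC2 : 0 < M * (4 * G * r * k + R) / m / (2 * r) + M * (r * (k * M)) / (2 * r * (2 * r)) := by
    positivity
  refine ⟨ε, hε, M * (4 * G * r * k + R) / m + (M * (4 * G * r * k + R) / m / (2 * r) +
    M * (r * (k * M)) / (2 * r * (2 * r))), by positivity, ?_⟩
  intro D hD0 hDε
  obtain ⟨s1, s2, s3, s4, s5⟩ := hball (show dist D 0 < ε by
    rw [Real.dist_eq, sub_zero, abs_of_nonneg hD0]; exact hDε)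
  have hδ := Real.sqrt_nonneg D
  have hδ2 : √D ^ 2 = D := Real.sq_sqrt hD0
  obtain ⟨B, x, hsol⟩ := exist hk hr hγ hG hρ hR hM0 hM hδ s3.le s5.le
  have s3' : M * √D ≤ 1 / 2 := by
    have : 0 ≤ M * √D := by positivity
    nlinarith
  have hasym := fun {Bk} (h1 : 0 < Bk) h2 i {a} (h3 : 0 ≤ a) h4 =>
    asym hk hr hγ hG hi0 hg0 hρ hR hM0 hM hm0 hm hδ s1 s2.le s3' hsol (Bk := Bk) h1 h2 i (a := a) h3 h4
  have huniq := fun {B'} {x'} h' =>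
    uniq_s9 hk hr hγ hG hi0 hg0 hρ hR hM0 hM hm0 hm hδ s1 s2.le s3' s4 (B' := B') (x' := x') hsol h'
  rw [hδ2] at hsol huniq
  simp only [hδ2] at hasym
  have hof := of_nsol hr hsol
  have hB : 0 < B := hsol.1
  have hrs : σK ^ 2 / σS ^ 2 = r ^ 2 := by rw [hrdef, div_pow]
  have hlam : B * σS ^ 2 / (σK ^ 2 + B ^ 2 * σS ^ 2) = 1 / (B + r ^ 2 / B) := by
    rw [hrdef]; field_simp
    ring
  have hphi : ∀ i, 1 - 1 / (B + r ^ 2 / B) * (r ^ 2 * x i / B) / (1 - 1 / (B + r ^ 2 / B) * B)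
      = 1 - x i := by
    intro i
    have hne : 1 - 1 / (B + r ^ 2 / B) * B = r ^ 2 / (B ^ 2 + r ^ 2) := by
      field_simp; ring
    rw [hne]
    field_simp
  obtain ⟨q, hq⟩ : ∃ q, q = (k : ℝ) ^ ((1 : ℝ) / 4) := ⟨_, rfl⟩
  have hq0 : 0 < q := by rw [hq]; positivity
  have hq4 : q ^ 4 = k := by
    rw [hq, ← Real.rpow_natCast, ← Real.rpow_mul hk0.le]; norm_num
  have hu0 : 0 < √(1 + (k : ℝ)) := by positivity
  have hu2 : √(1 + (k : ℝ)) ^ 2 = 1 + q ^ 4 := by rw [Real.sq_sqrt (by positivity), hq4]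
  have hv0 : 0 < √r := by positivity
  have hv2 : √r ^ 2 = r := Real.sq_sqrt hr.le
  have hvi : √(σS / σK) = 1 / √r := by
    rw [hrdef, one_div, ← Real.sqrt_inv, inv_div]
  have hck : r * q ^ 2 + r ^ 2 / (r * q ^ 2) = √r ^ 2 * √(1 + (k : ℝ)) ^ 2 / q ^ 2 := by
    rw [hu2, hv2]; field_simp; ring
  have hfin := fun i => hasym (Bk := r * q ^ 2) (by positivity) (by rw [← hq4]; ring) i
    (a := √(1 + (k : ℝ)) / q * √(γ i) * √r) (by positivity) (by
      rw [hck]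
      have := Real.sq_sqrt (hγ i).le
      rw [mul_pow, mul_pow, this]; field_simp)
  refine ⟨B, 1 / (B + r ^ 2 / B), fun i => r ^ 2 * x i / B, fun i => 1 - x i,
    fun i => 1 / (B + r ^ 2 / B) * (1 - x i), ?_, ?_, ?_, ?_, ?_, ?_, ?_⟩
  · rw [hrs, ← hrdef]
    exact hof
  · rintro ⟨B', β'⟩ ⟨h1, h2, h3, h4⟩
    simp only at h1 h2 h3 h4
    rw [hrs] at h4
    rw [← hrdef] at h2
    obtain ⟨e1, e2⟩ := huniq (to_nsol hr h1 h2 h3 h4)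
    refine ⟨e1.symm, ?_⟩
    funext i
    simp only
    rw [e2, e1]
    field_simp
  · exact hlam.symm
  · exact fun i => (hphi i).symm
  · exact fun i => rfl
  · intro i
    rw [← hrdef, ← hq]
    refine (hfin i).1.trans (mul_le_mul_of_nonneg_right ?_ hD0)
    linarith
  · intro i
    rw [hvi, ← hq]
    have e := (hfin i).2
    rw [hck] at e
    have e1 : √(1 + (k : ℝ)) / q * √(γ i) * √r / (√r ^ 2 * √(1 + (k : ℝ)) ^ 2 / q ^ 2)
        = q / √(1 + (k : ℝ)) * √(γ i) * (1 / √r) := by field_simp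
    rw [e1] at e
    have e2 : 1 / (B + r ^ 2 / B) * (1 - x i) = (1 - x i) / (B + r ^ 2 / B) := by ring
    simp only [e2]
    refine e.trans (mul_le_mul_of_nonneg_right ?_ hD0)
    linarith
end
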